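/- Let k and t be positive integers with k ≥ 4. There exists n₀ = n₀(k,t) such that for all integers n ≥ n₀: if F ⊆ binom([n],k) contains no copy of the k-uniform linear path P^{(k)}_{2t+1} and |F| = C(n−1,k−1) + C(n−2,k−1) + … + C(n−t,k−1), then there exists a set S ⊆ [n] with |S| = t such that F consists of exactly all k-subsets of [n] that intersect S. -/

import Mathlib

open Finset

/-- The family `F` of k-sets contains a k-uniform linear path of length ℓ. -/
def ContainsLinearPath (k ℓ : ℕ) {n : ℕ} (F : Finset (Finset (Fin n))) : Prop :=
  ∃ P : Fin ℓ → Finset (Fin n), Function.Injective P ∧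
    (∀ i, P i ∈ F) ∧ (∀ i, (P i).card = k) ∧
    (∀ i j : Fin ℓ, (i : ℕ) + 1 = (j : ℕ) → (P i ∩ P j).card = 1) ∧
    (∀ i j : Fin ℓ, (i : ℕ) + 1 < (j : ℕ) → P i ∩ P j = ∅)

/-- `A` is a kernel: no small set outside `A` meets all members containing `A`. -/
def Ker {α : Type} [DecidableEq α] (s : ℕ) (F : Finset (Finset α)) (A : Finset α) : Prop :=
  ∀ W : Finset α, W.card ≤ s → Disjoint W A → ∃ e ∈ F, A ⊆ e ∧ Disjoint e W

def pr {α : Type} [DecidableEq α] {k : ℕ} (χ : α → Fin k) (e : Finset α)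
    (A : Finset (Fin k)) : Finset α := e.filter (fun v => χ v ∈ A)

lemma Ker.mono {α : Type} [DecidableEq α] {s : ℕ} {F G : Finset (Finset α)} {A : Finset α}
    (h : Ker s F A) (hFG : F ⊆ G) : Ker s G A := by
  intro W hW hd
  obtain ⟨e, he, h1⟩ := h W hW hd
  exact ⟨e, hFG he, h1⟩

lemma Ker.self {α : Type} [DecidableEq α] {s : ℕ} {F : Finset (Finset α)} {A : Finset α}
    (h : A ∈ F) : Ker s F A := by
  intro W _ hd
  exact ⟨A, h, le_rfl, hd.symm⟩

def RB {α : Type} [DecidableEq α] {k : ℕ} (χ : α → Fin k) (F : Finset (Finset α)) : Prop :=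
  ∀ e ∈ F, e.card = k ∧ Set.InjOn χ e

lemma rb_surj {α : Type} [DecidableEq α] {k : ℕ} {χ : α → Fin k} {e : Finset α}
    (h : e.card = k ∧ Set.InjOn χ e) (c : Fin k) : ∃ v ∈ e, χ v = c := by
  have h1 : e.image χ = univ := by
    apply Finset.eq_univ_of_card
    rw [Finset.card_image_of_injOn h.2, h.1, Fintype.card_fin]
  have := Finset.mem_univ c
  rw [← h1, mem_image] at this
  exact this

lemma pr_sub {α : Type} [DecidableEq α] {k : ℕ} {χ : α → Fin k} {e : Finset α}
    {A : Finset (Fin k)} : pr χ e A ⊆ e := filter_subset _ _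

lemma pr_eq {α : Type} [DecidableEq α] {k : ℕ} {χ : α → Fin k} {e f : Finset α}
    (he : e.card = k ∧ Set.InjOn χ e) (hf : f.card = k ∧ Set.InjOn χ f)
    {A : Finset (Fin k)} (h : pr χ e A ⊆ f) : pr χ f A = pr χ e A := by
  ext v
  constructor
  · intro hv
    simp only [pr, mem_filter] at hv
    obtain ⟨w, hw, hwc⟩ := rb_surj he (χ v)
    have hw' : w ∈ pr χ e A := by simp [pr, hw, hwc, hv.2]
    have := hf.2 (h hw') hv.1 hwc
    rwa [← this]
  · intro hv
    have := h hv
    simp only [pr, mem_filter] at hv ⊢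
    exact ⟨this, hv.2⟩

lemma pr_card {α : Type} [DecidableEq α] {k : ℕ} {χ : α → Fin k} {e : Finset α}
    (he : e.card = k ∧ Set.InjOn χ e) (A : Finset (Fin k)) : (pr χ e A).card = A.card := by
  have : (pr χ e A).image χ = A := by
    ext c
    simp only [pr, mem_image, mem_filter]
    constructor
    · rintro ⟨v, ⟨_, h⟩, rfl⟩; exact h
    · intro hc
      obtain ⟨v, hv, rfl⟩ := rb_surj he c
      exact ⟨v, ⟨hv, hc⟩, rfl⟩
  rw [← this, card_image_of_injOn]
  · rw [this]
  · exact he.2.mono (fun v hv => pr_sub hv)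

lemma deletion {α : Type} [DecidableEq α] {k s : ℕ} (χ : α → Fin k)
    (𝒜 : Finset (Finset (Fin k))) : ∀ m : ℕ, ∀ F : Finset (Finset α), F.card ≤ m → RB χ F →
    ∃ R ⊆ F, ∃ D : Finset (Fin k) → Finset (Finset α),
      (∀ A, D A ⊆ F) ∧ (F.card ≤ R.card + ∑ A ∈ 𝒜, s * (D A).card) ∧
      (∀ A ∈ 𝒜, ∀ e ∈ R, Ker s R (pr χ e A)) ∧
      (∀ A ∈ 𝒜, ∀ e ∈ D A, ∀ f ∈ D A, e ≠ f → e ∩ f ≠ pr χ e A) := by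
  intro m
  induction m with
  | zero =>
    intro F hF hrb
    have : F = ∅ := by simpa using hF
    subst this
    exact ⟨∅, le_rfl, fun _ => ∅, by simp, by simp, by simp, by simp⟩
  | succ m ih =>
    intro F hF hrb
    by_cases hall : ∀ A ∈ 𝒜, ∀ e ∈ F, Ker s F (pr χ e A)
    · exact ⟨F, le_rfl, fun _ => ∅, by simp, by simp, hall, by simp⟩
    push Not at hall
    obtain ⟨A₀, hA₀, e₀, he₀, hk⟩ := hall
    simp only [Ker] at hk
    push Not at hk
    obtain ⟨W, hWs, hWd, hW⟩ := hk
    set a := pr χ e₀ A₀ with ha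
    set B := F.filter (fun e => pr χ e A₀ = a) with hB
    have he₀B : e₀ ∈ B := by simp [hB, he₀, ha]
    have hpop : ∃ v ∈ W, B.card ≤ s * (B.filter (fun e => v ∈ e)).card := by
      by_contra hcon
      push Not at hcon
      have h1 : B ⊆ W.biUnion (fun v => B.filter (fun e => v ∈ e)) := by
        intro e he
        have he' : e ∈ F ∧ pr χ e A₀ = a := by simpa [hB] using he
        have := hW e he'.1 (by rw [← he'.2]; exact pr_sub)
        rw [Finset.not_disjoint_iff] at this
        obtain ⟨v, hv1, hv2⟩ := this
        simp only [mem_biUnion, mem_filter]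
        exact ⟨v, hv2, he, hv1⟩
      have h2 := (card_le_card h1).trans card_biUnion_le
      have hWne : W.Nonempty := by
        have := hW e₀ he₀ pr_sub
        rw [Finset.not_disjoint_iff] at this
        obtain ⟨v, hv1, hv2⟩ := this
        exact ⟨v, hv2⟩
      have h3 : ∑ v ∈ W, s * (B.filter (fun e => v ∈ e)).card < ∑ v ∈ W, B.card :=
        Finset.sum_lt_sum_of_nonempty hWne hcon
      rw [← Finset.mul_sum, Finset.sum_const, smul_eq_mul] at h3
      have h4 : W.card * B.card ≤ s * B.card := Nat.mul_le_mul_right _ hWs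
      have h5 := Nat.mul_le_mul_left s h2
      omega
    obtain ⟨v, hvW, hv⟩ := hpop
    have hBF : B ⊆ F := filter_subset _ _
    have hcard : (F \ B).card ≤ m := by
      have := card_sdiff_add_card_eq_card hBF
      have : 0 < B.card := card_pos.2 ⟨_, he₀B⟩
      omega
    obtain ⟨R, hR, D, hD1, hD2, hD3, hD4⟩ := ih (F \ B) hcard
      (fun e he => hrb e (sdiff_subset he))
    refine ⟨R, hR.trans sdiff_subset,
      Function.update D A₀ (D A₀ ∪ B.filter (fun e => v ∈ e)), ?_, ?_, hD3, ?_⟩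
    · intro A
      by_cases hA : A = A₀
      · subst hA
        simp only [Function.update_self]
        exact union_subset ((hD1 _).trans sdiff_subset) ((filter_subset _ _).trans hBF)
      · simp only [Function.update_of_ne hA]
        exact (hD1 _).trans sdiff_subset
    · have e1 := card_sdiff_add_card_eq_card hBF
      rw [← Finset.add_sum_erase _ _ hA₀] at hD2 ⊢
      have e2 : ∑ A ∈ 𝒜.erase A₀, s * (Function.update D A₀ (D A₀ ∪ B.filter (fun e => v ∈ e)) A).card
          = ∑ A ∈ 𝒜.erase A₀, s * (D A).card := by
        apply sum_congr rfl
        intro A hA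
        rw [Function.update_of_ne (ne_of_mem_erase hA)]
      rw [e2, Function.update_self, card_union_of_disjoint, mul_add]
      · omega
      · rw [Finset.disjoint_left]
        intro e he he'
        have := hD1 _ he
        rw [mem_sdiff] at this
        exact this.2 (filter_subset _ _ he')
    · intro A hA e he f hf hef
      by_cases hAA : A = A₀
      · subst hAA
        simp only [Function.update_self, mem_union] at he hf
        have key : ∀ e ∈ B, ∀ f ∈ F \ B, ¬ (pr χ e A ⊆ f) := by
          intro e he f hf hsub
          rw [mem_sdiff] at hf
          have he' : e ∈ F ∧ pr χ e A = a := by simpa [hB] using he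
          apply hf.2
          simp only [hB, mem_filter]
          exact ⟨hf.1, by rw [← he'.2]; exact pr_eq (hrb e he'.1) (hrb f hf.1) hsub⟩
        have hF : ∀ e, e ∈ D A ∨ e ∈ B.filter (fun e => v ∈ e) → e ∈ F := by
          rintro e (h | h)
          · exact sdiff_subset (hD1 _ h)
          · exact hBF (filter_subset _ _ h)
        rcases he with he | he <;> rcases hf with hf | hf
        · exact hD4 A hA e he f hf hef
        · intro hc
          have h1 : pr χ e A ⊆ f := by rw [← hc]; exact inter_subset_right
          have h2 := pr_eq (hrb e (hF e (Or.inl he))) (hrb f (hF f (Or.inr hf))) h1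
          refine key f (filter_subset _ _ hf) e (hD1 _ he) ?_
          rw [h2]; exact pr_sub
        · intro hc
          refine key e (filter_subset _ _ he) f (hD1 _ hf) ?_
          rw [← hc]; exact inter_subset_right
        · intro hc
          rw [mem_filter] at he hf
          have he' : e ∈ F ∧ pr χ e A = a := by simpa [hB] using he.1
          have : v ∈ e ∩ f := mem_inter.2 ⟨he.2, hf.2⟩
          rw [hc, he'.2] at this
          exact (Finset.disjoint_left.1 hWd hvW) this
      · simp only [Function.update_of_ne hAA] at he hf
        exact hD4 A hA e he f hf hef

lemma furedi_aux {α : Type} [DecidableEq α] {k s : ℕ} (χ : α → Fin k) :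
    ∀ r : ℕ, ∀ N : Finset (Finset (Fin k)), (univ \ N).card ≤ r →
    ∀ F : Finset (Finset α), RB χ F →
    (∀ A ∈ N, ∀ e ∈ F, ∀ f ∈ F, e ≠ f → e ∩ f ≠ pr χ e A) →
    ∃ R ⊆ F, ∃ N' : Finset (Finset (Fin k)), F.card ≤ (2 * 2 ^ (2 ^ k) * (s + 1)) ^ r * R.card ∧
      (∀ A ∈ N', ∀ e ∈ R, ∀ f ∈ R, e ≠ f → e ∩ f ≠ pr χ e A) ∧
      (∀ A ∉ N', ∀ e ∈ R, Ker s R (pr χ e A)) := by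
  intro r
  induction r with
  | zero =>
    intro N hN F hrb hF
    refine ⟨F, le_rfl, N, by simp, hF, ?_⟩
    intro A hA
    have : univ \ N = ∅ := by simpa using hN
    have h2 : A ∈ univ \ N := by simp [hA]
    rw [this] at h2
    simp at h2
  | succ r ih =>
    intro N hN F hrb hF
    obtain ⟨R, hR, D, hD1, hD2, hD3, hD4⟩ := deletion (s := s) χ (univ \ N) F.card F le_rfl hrb
    set C := 2 * 2 ^ (2 ^ k) * (s + 1) with hC
    have hC1 : 1 ≤ 2 ^ (2 ^ k) * (s + 1) := Nat.mul_pos (by positivity) (by omega)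
    by_cases h2 : F.card ≤ 2 * R.card
    · refine ⟨R, hR, N, ?_, ?_, ?_⟩
      · refine h2.trans (Nat.mul_le_mul_right _ ?_)
        calc 2 ≤ C := by rw [hC, mul_assoc]; omega
          _ ≤ C ^ (r + 1) := Nat.le_self_pow (by omega) _
      · intro A hA e he f hf
        exact hF A hA e (hR he) f (hR hf)
      · intro A hA
        exact hD3 A (by simp [hA])
    · have : ∃ A ∈ univ \ N, F.card ≤ C * (D A).card := by
        by_contra hcon
        push Not at hcon
        have h3 : ∑ A ∈ univ \ N, C * (D A).card ≤ ∑ A ∈ univ \ N, F.card :=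
          sum_le_sum (fun A hA => (hcon A hA).le)
        rw [sum_const, smul_eq_mul] at h3
        have h4 : (univ \ N).card ≤ 2 ^ (2 ^ k) := by
          refine (card_le_univ _).trans ?_
          simp only [Fintype.card_finset, Fintype.card_fin]
          exact (Nat.lt_two_pow_self).le
        have h5 : (univ \ N).card * F.card ≤ 2 ^ (2 ^ k) * F.card := Nat.mul_le_mul_right _ h4
        rw [← mul_sum] at h3 hD2
        set σ := ∑ A ∈ univ \ N, (D A).card
        have h6 : 2 ^ (2 ^ k) * (2 * (s+1) * σ) ≤ 2 ^ (2 ^ k) * F.card := by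
          calc _ = C * σ := by rw [hC]; ring
            _ ≤ _ := h3.trans h5
        have h7 := Nat.le_of_mul_le_mul_left h6 (by positivity)
        nlinarith
      obtain ⟨A, hA, hAc⟩ := this
      have hAN : A ∉ N := by simpa using hA
      obtain ⟨R', hR', N', h1, h2, h3⟩ := ih (insert A N) (by
          have : univ \ insert A N = (univ \ N).erase A := by
            ext x; simp
          rw [this, card_erase_of_mem hA]; omega) (D A)
          (fun e he => hrb e (hD1 _ he)) (by
          intro A' hA' e he f hf hef
          rw [mem_insert] at hA'
          rcases hA' with rfl | hA'
          · exact hD4 _ hA e he f hf hef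
          · exact hF A' hA' e (hD1 _ he) f (hD1 _ hf) hef)
      refine ⟨R', hR'.trans (hD1 _), N', ?_, h2, h3⟩
      calc F.card ≤ C * (D A).card := hAc
        _ ≤ C * (C ^ r * R'.card) := Nat.mul_le_mul_left _ h1
        _ = _ := by ring

/-- Homogeneous subfamily, closed intersection structure. -/
lemma furedi {α : Type} [DecidableEq α] {k s : ℕ} (hs : 2 * k ≤ s) (χ : α → Fin k)
    (F : Finset (Finset α)) (hrb : RB χ F) (hne : F.Nonempty) :
    ∃ R ⊆ F, ∃ J : Set (Finset (Fin k)), R.Nonempty ∧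
      F.card ≤ (2 * 2 ^ (2 ^ k) * (s + 1)) ^ (2 ^ (2 ^ k)) * R.card ∧
      (∀ e ∈ R, ∀ f ∈ R, e ≠ f → ∀ A, e ∩ f = pr χ e A → A ∈ J) ∧
      (∀ A ∈ J, ∀ e ∈ R, Ker s R (pr χ e A)) ∧
      (∀ A ∈ J, ∀ B ∈ J, A ∩ B ∈ J) := by
  obtain ⟨R, hR, N', h1, h2, h3⟩ := furedi_aux (s := s) χ (2 ^ (2 ^ k)) ∅ (by
    refine (card_le_univ _).trans ?_
    simp only [Fintype.card_finset, Fintype.card_fin]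
    exact (Nat.lt_two_pow_self).le) F hrb (by simp)
  have hRne : R.Nonempty := by
    rw [← card_pos] at hne ⊢
    by_contra h
    have : R.card = 0 := by omega
    rw [this] at h1
    omega
  have hker : ∀ A ∈ {A : Finset (Fin k) | A ∉ N' ∨ A = univ}, ∀ e ∈ R, Ker s R (pr χ e A) := by
    rintro A (hA | rfl) e he
    · exact h3 A hA e he
    · have : pr χ e univ = e := by simp [pr]
      rw [this]; exact Ker.self he
  refine ⟨R, hR, {A | A ∉ N' ∨ A = univ}, hRne, h1, ?_, hker, ?_⟩
  · intro e he f hf hef A hA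
    left
    intro hN
    exact h2 A hN e he f hf hef hA
  · intro A hA B hB
    obtain ⟨e, he⟩ := hRne
    have hcard : ∀ e ∈ R, e.card = k := fun e he => (hrb e (hR he)).1
    obtain ⟨f, hf, hf1, hf2⟩ := hker A hA e he (e \ pr χ e A)
      ((card_le_card sdiff_subset).trans (by rw [hcard e he]; omega)) sdiff_disjoint
    obtain ⟨g, hg, hg1, hg2⟩ := hker B hB e he ((e ∪ f) \ pr χ e B)
      ((card_le_card sdiff_subset).trans ((card_union_le _ _).trans (by
        rw [hcard e he, hcard f hf]; omega))) sdiff_disjoint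
    have hfg : f ∩ g = pr χ e (A ∩ B) := by
      ext v
      rw [Finset.disjoint_left] at hf2 hg2
      have a1 := @hf2 v
      have a2 := @hg2 v
      have a3 := @hf1 v
      have a4 := @hg1 v
      simp only [pr, mem_inter, mem_filter, mem_sdiff, mem_union] at *
      tauto
    have hsub : pr χ e (A ∩ B) ⊆ f := by rw [← hfg]; exact inter_subset_left
    have h5 := pr_eq (hrb e (hR he)) (hrb f (hR hf)) hsub
    by_cases hEq : f = g
    · right
      subst hEq
      rw [inter_self] at hfg
      have := pr_card (hrb e (hR he)) (A ∩ B)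
      rw [← hfg, hcard f hf] at this
      rw [← Finset.card_eq_iff_eq_univ, Fintype.card_fin]
      exact this.symm
    · left
      intro hN
      exact h2 _ hN f hf g hg hEq (hfg.trans h5.symm)

lemma coloring_one {α : Type} [DecidableEq α] [Fintype α] {k : ℕ}
    (e : Finset α) (he : e.card = k) :
    Fintype.card (α → Fin k) ≤
      k ^ k * ((univ : Finset (α → Fin k)).filter (fun χ => Set.InjOn χ e)).card := by
  classical
  have eq : e ≃ Fin k := Finset.equivFinOfCardEq he
  let X := (univ : Finset (α → Fin k)).filter (fun χ => Set.InjOn χ e)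
  let g : (α → Fin k) → (α → Fin k) := fun ψ v => if h : v ∈ e then eq ⟨v, h⟩ else ψ v
  have hg : ∀ ψ, g ψ ∈ X := by
    intro ψ
    simp only [X, mem_filter, mem_univ, true_and]
    intro v hv w hw hvw
    have hv' : v ∈ e := hv
    have hw' : w ∈ e := hw
    simp only [g, hv', hw', dif_pos] at hvw
    have := eq.injective hvw
    exact congrArg Subtype.val this
  let φ : (α → Fin k) → X × (e → Fin k) := fun ψ => (⟨g ψ, hg ψ⟩, fun v => ψ v)
  have hφ : Function.Injective φ := by
    intro ψ ψ' h
    simp only [φ, Prod.mk.injEq, Subtype.mk.injEq] at h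
    funext v
    by_cases hv : v ∈ e
    · exact congrFun h.2 ⟨v, hv⟩
    · have := congrFun h.1 v
      simpa [g, hv] using this
  have := Fintype.card_le_of_injective φ hφ
  rw [Fintype.card_prod, Fintype.card_coe, Fintype.card_fun (α := e), Fintype.card_coe, he,
    Fintype.card_fin, mul_comm] at this
  exact this

lemma coloring {α : Type} [DecidableEq α] [Fintype α] {k : ℕ} (hk : 0 < k)
    (F : Finset (Finset α)) (hF : ∀ e ∈ F, e.card = k) :
    ∃ χ : α → Fin k, ∃ G ⊆ F, RB χ G ∧ F.card ≤ k ^ k * G.card := by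
  classical
  by_contra hcon
  push Not at hcon
  have h1 : ∀ χ : α → Fin k, k ^ k * (F.filter (fun e : Finset α => Set.InjOn χ (e : Set α))).card < F.card := by
    intro χ
    refine hcon χ _ (filter_subset _ _) ?_
    intro e he
    rw [mem_filter] at he
    exact ⟨hF e he.1, he.2⟩
  have hne : (univ : Finset (α → Fin k)).Nonempty := ⟨fun _ => ⟨0, hk⟩, mem_univ _⟩
  have h2 := Finset.sum_lt_sum_of_nonempty hne (fun χ _ => h1 χ)
  rw [← mul_sum, sum_const, smul_eq_mul, Finset.card_univ] at h2
  have h3 : ∑ χ : α → Fin k, (F.filter (fun e : Finset α => Set.InjOn χ (e : Set α))).card =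
      ∑ e ∈ F, ((univ : Finset (α → Fin k)).filter (fun χ => Set.InjOn χ e)).card := by
    simp only [card_filter]
    rw [sum_comm]
  rw [h3, mul_sum] at h2
  have h4 : ∑ e ∈ F, Fintype.card (α → Fin k) ≤ ∑ e ∈ F,
      k ^ k * ((univ : Finset (α → Fin k)).filter (fun χ => Set.InjOn χ e)).card :=
    sum_le_sum (fun e he => coloring_one e (hF e he))
  rw [sum_const, smul_eq_mul, mul_comm] at h4
  omega

lemma expand {α : Type} [DecidableEq α] {k s m : ℕ} {F : Finset (Finset α)}
    (hF : ∀ e ∈ F, e.card = k) (K : ℕ → Finset α) (hK : ∀ i < m, Ker s F (K i))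
    (hs : 2 * m * k ≤ s) : ∀ r ≤ m, ∃ e : ℕ → Finset α,
      (∀ i < r, e i ∈ F ∧ K i ⊆ e i) ∧ (∀ i < r, ∀ j < m, e i ∩ K j ⊆ K i) ∧
      (∀ i < r, ∀ j < r, i ≠ j → e i ∩ e j = K i ∩ K j) := by
  have hKc : ∀ i < m, (K i).card ≤ k := by
    intro i hi
    obtain ⟨e, he, h1, _⟩ := hK i hi ∅ (by simp) (by simp)
    rw [← hF e he]; exact card_le_card h1
  intro r
  induction r with
  | zero => intro _; exact ⟨fun _ => ∅, by simp, by simp, by simp⟩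
  | succ r ih =>
    intro hr
    obtain ⟨e, h1, h2, h3⟩ := ih (by omega)
    set W := ((range r).biUnion e ∪ (range m).biUnion K) \ K r with hW
    have hWc : W.card ≤ s := by
      refine (card_le_card sdiff_subset).trans ((card_union_le _ _).trans ?_)
      have a1 : ((range r).biUnion e).card ≤ r * k := by
        refine card_biUnion_le.trans ?_
        refine (sum_le_card_nsmul _ _ k ?_).trans (by simp)
        intro i hi
        exact (hF _ (h1 i (mem_range.1 hi)).1).le
      have a2 : ((range m).biUnion K).card ≤ m * k := by
        refine card_biUnion_le.trans ?_
        refine (sum_le_card_nsmul _ _ k ?_).trans (by simp)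
        intro i hi
        exact hKc i (mem_range.1 hi)
      have : r * k ≤ m * k := Nat.mul_le_mul_right _ (by omega)
      have : 2 * m * k = m * k + m * k := by ring
      omega
    obtain ⟨f, hf, hf1, hf2⟩ := hK r (by omega) W hWc sdiff_disjoint
    rw [Finset.disjoint_left] at hf2
    have hfe : ∀ i < r, f ∩ e i = K r ∩ K i := by
      intro i hi
      ext v
      constructor
      · intro hv
        rw [mem_inter] at hv
        have hvr : v ∈ K r := by
          by_contra hc
          exact hf2 hv.1 (by
            rw [hW, mem_sdiff, mem_union]
            exact ⟨Or.inl (mem_biUnion.2 ⟨i, mem_range.2 hi, hv.2⟩), hc⟩)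
        exact mem_inter.2 ⟨hvr, h2 i hi r (by omega) (mem_inter.2 ⟨hv.2, hvr⟩)⟩
      · intro hv
        rw [mem_inter] at hv
        exact mem_inter.2 ⟨hf1 hv.1, (h1 i hi).2 hv.2⟩
    refine ⟨Function.update e r f, ?_, ?_, ?_⟩
    · intro i hi
      by_cases hir : i = r
      · subst hir; simp [hf, hf1]
      · rw [Function.update_of_ne hir]; exact h1 i (by omega)
    · intro i hi j hj
      by_cases hir : i = r
      · subst hir
        rw [Function.update_self]
        intro v hv
        rw [mem_inter] at hv
        by_contra hc
        exact hf2 hv.1 (by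
            rw [hW, mem_sdiff, mem_union]
            exact ⟨Or.inr (mem_biUnion.2 ⟨j, mem_range.2 hj, hv.2⟩), hc⟩)
      · rw [Function.update_of_ne hir]; exact h2 i (by omega) j hj
    · intro i hi j hj hij
      by_cases hir : i = r
      · subst hir
        rw [Function.update_self, Function.update_of_ne (Ne.symm hij)]
        exact hfe j (by omega)
      · rw [Function.update_of_ne hir]
        by_cases hjr : j = r
        · subst hjr
          rw [Function.update_self, inter_comm, hfe i (by omega), inter_comm]
        · rw [Function.update_of_ne hjr]
          exact h3 i (by omega) j (by omega) hij

lemma linear_path {n k s m : ℕ} (hk : 2 ≤ k) {F : Finset (Finset (Fin n))}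
    (hF : ∀ e ∈ F, e.card = k) (K : ℕ → Finset (Fin n)) (hK : ∀ i < m, Ker s F (K i))
    (hs : 2 * m * k ≤ s) (h1 : ∀ i, i + 1 < m → (K i ∩ K (i + 1)).card = 1)
    (h2 : ∀ i j, i + 1 < j → j < m → K i ∩ K j = ∅) : ContainsLinearPath k m F := by
  obtain ⟨e, e1, e2, e3⟩ := expand hF K hK hs m le_rfl
  have A1 : ∀ i j : Fin m, (i : ℕ) + 1 = (j : ℕ) → (e i ∩ e j).card = 1 := by
    intro i j hij
    rw [e3 i i.2 j j.2 (by omega), ← hij]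
    exact h1 i (by omega)
  have A2 : ∀ i j : Fin m, (i : ℕ) + 1 < (j : ℕ) → e i ∩ e j = ∅ := by
    intro i j hij
    rw [e3 i i.2 j j.2 (by omega)]
    exact h2 i j hij j.2
  have A3 : ∀ i j : Fin m, (i : ℕ) < j → e i ≠ e j := by
    intro i j hij heq
    have hc : (e i ∩ e j).card = k := by rw [← heq, inter_self]; exact hF _ (e1 i i.2).1
    by_cases h : (i : ℕ) + 1 = j
    · rw [A1 i j h] at hc; omega
    · rw [A2 i j (by omega)] at hc; simp at hc; omega
  refine ⟨fun i => e i, ?_, fun i => (e1 i i.2).1, fun i => hF _ (e1 i i.2).1, A1, A2⟩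
  intro i j hij
  rcases lt_trichotomy (i : ℕ) j with h | h | h
  · exact (A3 i j h hij).elim
  · exact Fin.ext h
  · exact (A3 j i h hij.symm).elim

/-- kernel pairs -/
def KP {α : Type} [DecidableEq α] (s : ℕ) (F : Finset (Finset α)) (x y : α) : Prop :=
  x ≠ y ∧ Ker s F {x, y}

lemma KP.symm {α : Type} [DecidableEq α] {s : ℕ} {F : Finset (Finset α)} {x y : α}
    (h : KP s F x y) : KP s F y x := ⟨h.1.symm, by rw [pair_comm]; exact h.2⟩

lemma KP.mono {α : Type} [DecidableEq α] {s : ℕ} {F G : Finset (Finset α)} {x y : α}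
    (h : KP s F x y) (hFG : F ⊆ G) : KP s G x y := ⟨h.1, h.2.mono hFG⟩

lemma linear_path_of_pairs {n k s m : ℕ} (hk : 2 ≤ k) {F : Finset (Finset (Fin n))}
    (hF : ∀ e ∈ F, e.card = k) (v : ℕ → Fin n) (hv : ∀ i ≤ m, ∀ j ≤ m, v i = v j → i = j)
    (hK : ∀ i < m, KP s F (v i) (v (i + 1)))
    (hs : 2 * m * k ≤ s) : ContainsLinearPath k m F := by
  refine linear_path hk hF (fun i => {v i, v (i + 1)}) (fun i hi => (hK i hi).2) hs ?_ ?_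
  · intro i hi
    rw [card_eq_one]
    refine ⟨v (i + 1), ?_⟩
    ext x
    simp only [mem_inter, mem_insert, mem_singleton]
    constructor
    · rintro ⟨h1 | h1, h2 | h2⟩
      · exact h2
      · have := hv i (by omega) (i + 1 + 1) (by omega) (by rw [← h1, ← h2])
        omega
      · exact h1
      · exact h1
    · rintro rfl; simp
  · intro i j hij hj
    ext x
    simp only [mem_inter, mem_insert, mem_singleton, notMem_empty, iff_false]
    rintro ⟨h1 | h1, h2 | h2⟩
    all_goals
      have := hv _ (by omega) _ (by omega) (h1.symm.trans h2)
      omega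

lemma linear_path_of_edge_pairs {n k s m : ℕ} (hk : 2 ≤ k) {F : Finset (Finset (Fin n))}
    (hF : ∀ e ∈ F, e.card = k) (e : Finset (Fin n)) (he : e ∈ F)
    (v : ℕ → Fin n) (hv : ∀ i ≤ m, ∀ j ≤ m, v i = v j → i = j)
    (h0 : v 0 ∈ e) (hne : ∀ i, 1 ≤ i → i ≤ m → v i ∉ e)
    (hK : ∀ i < m, KP s F (v i) (v (i + 1)))
    (hs : 2 * (m + 1) * k ≤ s) : ContainsLinearPath k (m + 1) F := by
  refine linear_path hk hF (fun i => if i = 0 then e else {v (i - 1), v i}) ?_ hs ?_ ?_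
  · intro i hi
    by_cases h : i = 0
    · simp only [h, if_true]; exact Ker.self he
    · simp only [h, if_false]
      have := (hK (i - 1) (by omega)).2
      rwa [Nat.sub_add_cancel (by omega)] at this
  · intro i hi
    rw [card_eq_one]
    refine ⟨v i, ?_⟩
    ext x
    by_cases h : i = 0
    · subst h
      simp only [mem_inter, mem_insert, mem_singleton, if_true, Nat.add_sub_cancel,
        Nat.add_eq_zero_iff, one_ne_zero, and_false, if_false]
      constructor
      · rintro ⟨h1, h2 | h2⟩
        · exact h2
        · exact (hne 1 le_rfl (by omega) (by rw [zero_add] at h2; rwa [← h2])).elim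
      · rintro rfl; simp [h0]
    · simp only [mem_inter, mem_insert, mem_singleton, h, if_false, Nat.add_sub_cancel,
        Nat.add_eq_zero_iff, one_ne_zero, and_false]
      constructor
      · rintro ⟨h1 | h1, h2 | h2⟩
        · exact h2
        · have := hv (i - 1) (by omega) (i + 1) (by omega) (by rw [← h1, ← h2])
          omega
        · exact h1
        · exact h1
      · rintro rfl; simp
  · intro i j hij hj
    have hj0 : j ≠ 0 := by omega
    ext x
    by_cases h : i = 0
    · subst h
      simp only [mem_inter, mem_insert, mem_singleton, if_true, hj0, if_false, notMem_empty, iff_false]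
      rintro ⟨h1, rfl | rfl⟩
      · exact hne _ (by omega) (by omega) h1
      · exact hne _ (by omega) (by omega) h1
    · simp only [mem_inter, mem_insert, mem_singleton, h, hj0, if_false, notMem_empty, iff_false]
      rintro ⟨h1 | h1, h2 | h2⟩
      all_goals
        have := hv _ (by omega) _ (by omega) (h1.symm.trans h2)
        omega

lemma greedy_path {α : Type} [DecidableEq α] {d : ℕ} (adj : α → α → Prop) (X : Finset α)
    (hX : X.Nonempty)
    (h : ∀ v ∈ X, ∀ W : Finset α, W.card ≤ d → ∃ w ∈ X, w ∉ W ∧ adj v w) :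
    ∀ r ≤ d, ∃ v : ℕ → α, (∀ i ≤ r, v i ∈ X) ∧ (∀ i ≤ r, ∀ j ≤ r, v i = v j → i = j) ∧
      ∀ i < r, adj (v i) (v (i + 1)) := by
  intro r
  induction r with
  | zero =>
    intro _
    obtain ⟨x, hx⟩ := hX
    exact ⟨fun _ => x, fun _ _ => hx, by intros; omega, by simp⟩
  | succ r ih =>
    intro hr
    obtain ⟨v, v1, v2, v3⟩ := ih (by omega)
    obtain ⟨w, hw, hwW, hadj⟩ := h (v r) (v1 r le_rfl) ((range (r+1)).image v)
      (card_image_le.trans (by simpa using hr))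
    have hwv : ∀ i ≤ r, v i ≠ w := by
      intro i hi hc
      exact hwW (mem_image.2 ⟨i, mem_range.2 (by omega), hc⟩)
    refine ⟨Function.update v (r + 1) w, ?_, ?_, ?_⟩
    · intro i hi
      by_cases hir : i = r + 1
      · subst hir; simpa using hw
      · rw [Function.update_of_ne hir]; exact v1 i (by omega)
    · intro i hi j hj
      by_cases hir : i = r + 1 <;> by_cases hjr : j = r + 1
      · omega
      · subst hir
        rw [Function.update_self, Function.update_of_ne hjr]
        intro hc; exact (hwv j (by omega) hc.symm).elim
      · subst hjr
        rw [Function.update_self, Function.update_of_ne hir]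
        intro hc; exact (hwv i (by omega) hc).elim
      · rw [Function.update_of_ne hir, Function.update_of_ne hjr]
        exact v2 i (by omega) j (by omega)
    · intro i hi
      rw [Function.update_of_ne (by omega)]
      by_cases hir : i = r
      · subst hir; simpa using hadj
      · rw [Function.update_of_ne (by omega)]; exact v3 i (by omega)

open Classical in
lemma degenerate {α : Type} [DecidableEq α] {d : ℕ} (adj : α → α → Prop)
    (hsymm : ∀ x y, adj x y → adj y x) (hirr : ∀ x, ¬ adj x x)
    (hno : ¬ ∃ X : Finset α, X.Nonempty ∧
      ∀ v ∈ X, ∀ W : Finset α, W.card ≤ d → ∃ w ∈ X, w ∉ W ∧ adj v w) :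
    ∀ X : Finset α, ∑ x ∈ X, (X.filter (adj x)).card ≤ 2 * d * X.card := by
  intro X
  induction X using Finset.strongInduction with
  | H X ih =>
    rcases X.eq_empty_or_nonempty with rfl | hne
    · simp
    push Not at hno
    obtain ⟨v, hv, W, hW, hadj⟩ := hno X hne
    have h1 := ih (X.erase v) (erase_ssubset hv)
    have hdeg : (X.filter (adj v)).card ≤ d := by
      refine (card_le_card ?_).trans hW
      intro w hw
      rw [mem_filter] at hw
      by_contra hc
      exact hadj w hw.1 hc hw.2
    rw [← add_sum_erase _ _ hv]
    have h2 : ∀ x ∈ X.erase v, (X.filter (adj x)).card =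
        ((X.erase v).filter (adj x)).card + if adj x v then 1 else 0 := by
      intro x hx
      conv_lhs => rw [← insert_erase hv]
      rw [filter_insert]
      split_ifs with h
      · rw [card_insert_of_notMem (by simp)]
      · rfl
    rw [sum_congr rfl h2, sum_add_distrib, ← card_filter]
    have h3 : ((X.erase v).filter (fun x => adj x v)).card ≤ d := by
      refine (card_le_card ?_).trans hdeg
      intro x hx
      simp only [mem_filter, mem_erase] at hx ⊢
      exact ⟨hx.1.2, hsymm _ _ hx.2⟩
    have h4 : (X.erase v).card + 1 = X.card := card_erase_add_one hv
    rw [← h4, mul_add]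
    omega

lemma structure_J {k : ℕ} (hk : 4 ≤ k) (J : Set (Finset (Fin k)))
    (hJ : ∀ A ∈ J, ∀ B ∈ J, A ∩ B ∈ J)
    (hc : ∀ i j : Fin k, i ≠ j → {i}ᶜ ∈ J ∨ {j}ᶜ ∈ J ∨ ({i, j} : Finset (Fin k))ᶜ ∈ J) :
    (∃ x : Fin k, ∀ b, b ≠ x → {x, b} ∈ J) ∨
    (∃ a b : Fin k, a ≠ b ∧ {a} ∈ J ∧ {b} ∈ J ∧ {a, b} ∈ J) := by
  by_cases h : ∃ i j : Fin k, i ≠ j ∧ {i}ᶜ ∉ J ∧ {j}ᶜ ∉ J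
  · right
    obtain ⟨i, j, hij, hi, hj⟩ := h
    have hij' : ({i, j} : Finset (Fin k))ᶜ ∈ J := by
      rcases hc i j hij with h | h | h
      · exact (hi h).elim
      · exact (hj h).elim
      · exact h
    have key : ∀ Y : Finset (Fin k), i ∉ Y → (({i, j} : Finset (Fin k))ᶜ \ Y) ∈ J := by
      intro Y
      induction Y using Finset.induction with
      | empty => intro _; simpa using hij'
      | insert m Y hm ih =>
        intro hiY
        rw [mem_insert, not_or] at hiY
        have h1 := ih hiY.2
        rcases hc i m hiY.1 with h | h | h
        · exact (hi h).elim
        · have := hJ _ h1 _ h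
          convert this using 1
          ext x; simp; tauto
        · have := hJ _ h1 _ h
          convert this using 1
          ext x; simp; tauto
    have key2 : ∀ X : Finset (Fin k), i ∉ X → j ∉ X → X ∈ J := by
      intro X h1 h2
      have := key ((insert i X)ᶜ) (by simp)
      convert this using 1
      ext x
      simp only [mem_sdiff, mem_compl, mem_insert, mem_singleton, not_or, not_and, not_not]
      constructor
      · intro hx
        refine ⟨⟨?_, ?_⟩, fun _ => hx⟩
        · rintro rfl; exact h1 hx
        · rintro rfl; exact h2 hx
      · rintro ⟨⟨h3, h4⟩, h5⟩; exact h5 h3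
    have hcard : 2 ≤ (({i, j} : Finset (Fin k))ᶜ).card := by
      rw [card_compl, Fintype.card_fin, card_pair hij]; omega
    obtain ⟨a, ha, b, hb, hab⟩ := Finset.one_lt_card.1 (show 1 < _ from hcard)
    simp only [mem_compl, mem_insert, mem_singleton, not_or] at ha hb
    refine ⟨a, b, hab, key2 _ ?_ ?_, key2 _ ?_ ?_, key2 _ ?_ ?_⟩ <;>
      simp only [mem_insert, mem_singleton, not_or] <;> tauto
  · left
    push Not at h
    have : ∃ x : Fin k, ∀ i, i ≠ x → {i}ᶜ ∈ J := by
      by_cases h2 : ∃ x : Fin k, {x}ᶜ ∉ J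
      · obtain ⟨x, hx⟩ := h2
        exact ⟨x, fun i hi => h x i hi.symm hx⟩
      · push Not at h2
        exact ⟨⟨0, by omega⟩, fun i _ => h2 i⟩
    obtain ⟨x, hx⟩ := this
    refine ⟨x, fun b hb => ?_⟩
    have hcard : 2 ≤ (({x, b} : Finset (Fin k))ᶜ).card := by
      rw [card_compl, Fintype.card_fin, card_pair hb.symm]; omega
    obtain ⟨m, hm⟩ := card_pos.1 (lt_of_lt_of_le (by norm_num) hcard)
    simp only [mem_compl, mem_insert, mem_singleton, not_or] at hm
    have key : ∀ Y : Finset (Fin k), x ∉ Y → {m}ᶜ \ Y ∈ J := by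
      intro Y
      induction Y using Finset.induction with
      | empty => intro _; simpa using hx m hm.1
      | insert c Y hc' ih =>
        intro hY
        rw [mem_insert, not_or] at hY
        have := hJ _ (ih hY.2) _ (hx c (Ne.symm hY.1))
        convert this using 1
        ext z; simp; tauto
    have := key ({x, b}ᶜ) (by simp)
    convert this using 1
    ext z
    simp only [mem_sdiff, mem_compl, mem_insert, mem_singleton, not_or, not_and, not_not]
    constructor
    · rintro (rfl | rfl)
      · exact ⟨Ne.symm hm.1, fun h => (h rfl).elim⟩
      · exact ⟨Ne.symm hm.2, fun _ => rfl⟩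
    · rintro ⟨_, h⟩
      by_cases hz : z = x
      · exact Or.inl hz
      · exact Or.inr (h hz)

lemma pr_pair {α : Type} [DecidableEq α] {k : ℕ} {χ : α → Fin k} {e : Finset α}
    (he : Set.InjOn χ e) {v w : α} (hv : v ∈ e) (hw : w ∈ e) :
    pr χ e {χ v, χ w} = {v, w} := by
  ext x
  simp only [pr, mem_filter, mem_insert, mem_singleton]
  constructor
  · rintro ⟨hx, h | h⟩
    · exact Or.inl (he hx hv h)
    · exact Or.inr (he hx hw h)
  · rintro (rfl | rfl)
    · exact ⟨hv, Or.inl rfl⟩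
    · exact ⟨hw, Or.inr rfl⟩

lemma pr_single {α : Type} [DecidableEq α] {k : ℕ} {χ : α → Fin k} {e : Finset α}
    (he : Set.InjOn χ e) {v : α} (hv : v ∈ e) :
    pr χ e {χ v} = {v} := by
  have := pr_pair he hv hv
  simpa using this

/-- the family of edges without a star of kernel pairs is small -/
lemma nostar_small (k t s : ℕ) (hk : 4 ≤ k) (hs : 2 * (2 * t + 2) * k ≤ s) :
    ∃ C : ℕ, ∀ n : ℕ, ∀ F : Finset (Finset (Fin n)), ∀ Z : Finset (Fin n),
      (∀ e ∈ F, e.card = k) → (∀ e ∈ F, e ⊆ Z) → ¬ ContainsLinearPath k (2 * t + 1) F →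
      (∀ e ∈ F, ¬ ∃ x ∈ e, ∀ b ∈ e, b ≠ x → KP s F x b) →
      F.card ≤ C * Z.card ^ (k - 2) := by
  refine ⟨k ^ k * ((2 * 2 ^ (2 ^ k) * (s + 1)) ^ (2 ^ (2 ^ k))), ?_⟩
  intro n F Z hF hZ hP hstar
  obtain ⟨χ, G, hGF, hG, hGc⟩ := coloring (by omega) F hF
  rcases G.eq_empty_or_nonempty with rfl | hne
  · have : F.card = 0 := by simpa using hGc
    omega
  have h2s : 2 * k ≤ s := by nlinarith
  obtain ⟨R, hRG, J, hRne, hRc, hJ1, hJ2, hJ3⟩ := furedi h2s χ G hG hne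
  have hRB : RB χ R := fun e he => hG e (hRG he)
  suffices h : R.card ≤ Z.card ^ (k - 2) by
    calc F.card ≤ k ^ k * G.card := hGc
      _ ≤ k ^ k * (_ * R.card) := Nat.mul_le_mul_left _ hRc
      _ ≤ k ^ k * (_ * Z.card ^ (k - 2)) :=
        Nat.mul_le_mul_left _ (Nat.mul_le_mul_left _ h)
      _ = _ := by ring
  by_contra hbig
  push Not at hbig
  have hc : ∀ i j : Fin k, i ≠ j →
      {i}ᶜ ∈ J ∨ {j}ᶜ ∈ J ∨ ({i, j} : Finset (Fin k))ᶜ ∈ J := by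
    intro i j hij
    by_contra hcon
    push Not at hcon
    obtain ⟨c1, c2, c3⟩ := hcon
    set B : Finset (Fin k) := ({i, j} : Finset (Fin k))ᶜ with hB
    have hinj : Set.InjOn (fun e => pr χ e B) (R : Set (Finset (Fin n))) := by
      intro e he f hf hef
      by_contra hne
      have he' : e ∈ R := he
      have hf' : f ∈ R := hf
      have hef' : pr χ e B = pr χ f B := hef
      set A := (e ∩ f).image χ with hA
      have hpa : e ∩ f = pr χ e A := by
        ext v
        simp only [pr, mem_filter, hA, mem_image]
        constructor
        · intro hv; exact ⟨(mem_inter.1 hv).1, v, hv, rfl⟩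
        · rintro ⟨hv, w, hw, hwv⟩
          have := (hRB e he').2 (mem_inter.1 hw).1 hv hwv
          rwa [← this]
      have hAJ := hJ1 e he' f hf' hne A hpa
      have hBA : B ⊆ A := by
        intro c hcB
        obtain ⟨v, hv, rfl⟩ := rb_surj (hRB e he') c
        have hv1 : v ∈ pr χ e B := by simp [pr, hv, hcB]
        have hv2 : v ∈ f := by rw [hef'] at hv1; exact pr_sub hv1
        exact mem_image.2 ⟨v, mem_inter.2 ⟨hv, hv2⟩, rfl⟩
      have hAu : A ≠ univ := by
        intro hu
        rw [hu] at hpa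
        have h3 : e ∩ f = e := by rw [hpa]; simp [pr]
        have h4 : e ⊆ f := by rw [← h3]; exact inter_subset_right
        exact hne (Finset.eq_of_subset_of_card_le h4 (by rw [(hRB e he').1, (hRB f hf').1]))
      have hBm : ∀ x, x ≠ i → x ≠ j → x ∈ A := fun x h1 h2 => hBA (by simp [hB, h1, h2])
      by_cases hiA : i ∈ A <;> by_cases hjA : j ∈ A
      · apply hAu; ext x
        simp only [mem_univ, iff_true]
        by_cases hx : x = i
        · rwa [hx]
        by_cases hx' : x = j
        · rwa [hx']
        exact hBm x hx hx'
      · apply c2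
        convert hAJ using 1
        ext x
        simp only [mem_compl, mem_singleton]
        constructor
        · intro hx
          by_cases hx' : x = i
          · rwa [hx']
          exact hBm x hx' hx
        · rintro hx rfl; exact hjA hx
      · apply c1
        convert hAJ using 1
        ext x
        simp only [mem_compl, mem_singleton]
        constructor
        · intro hx
          by_cases hx' : x = j
          · rwa [hx']
          exact hBm x hx hx'
        · rintro hx rfl; exact hiA hx
      · apply c3
        convert hAJ using 1
        ext x
        simp only [hB, mem_compl, mem_insert, mem_singleton, not_or]
        constructor
        · intro hx; exact hBm x hx.1 hx.2
        · intro hx; constructor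
          · rintro rfl; exact hiA hx
          · rintro rfl; exact hjA hx
    have hBc : B.card = k - 2 := by
      rw [hB, card_compl, Fintype.card_fin, card_pair hij]
    have : R.card ≤ (powersetCard (k - 2) Z).card := by
      refine Finset.card_le_card_of_injOn (fun e => pr χ e B) ?_ hinj
      intro e he
      have he' : e ∈ R := he
      simp only [mem_coe, mem_powersetCard]
      exact ⟨pr_sub.trans (hZ e (hGF (hRG he'))), by rw [pr_card (hRB e he'), hBc]⟩
    rw [card_powersetCard] at this
    have := this.trans (Nat.choose_le_pow Z.card (k-2))
    omega
  rcases structure_J hk J hJ3 hc with ⟨x, hx⟩ | ⟨a, b, hab, ha, hb, habJ⟩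
  · obtain ⟨e, he⟩ := hRne
    obtain ⟨v, hv, rfl⟩ := rb_surj (hRB e he) x
    apply hstar e (hGF (hRG he))
    refine ⟨v, hv, fun w hw hwv => ⟨hwv.symm, ?_⟩⟩
    have h1 : χ w ≠ χ v := fun h => hwv ((hRB e he).2 hw hv h)
    have h2 := hJ2 _ (hx _ h1) e he
    rw [pr_pair (hRB e he).2 hv hw] at h2
    exact h2.mono (hRG.trans hGF)
  · apply hP
    have step : ∀ a b : Fin k, a ≠ b → {a} ∈ J → {a, b} ∈ J →
        ∀ e ∈ R, ∀ v ∈ e, χ v = a → ∀ W : Finset (Fin n), W.card ≤ s →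
        ∃ w, (∃ f ∈ R, w ∈ f ∧ χ w = b) ∧ w ∉ W ∧ KP s R v w := by
      intro a b hab ha habJ e he v hv hva W hW
      have h1 := hJ2 _ ha e he
      subst hva
      rw [pr_single (hRB e he).2 hv] at h1
      obtain ⟨f, hf, hvf, hfW⟩ := h1 (W.erase v) ((card_erase_le).trans hW) (by simp)
      rw [singleton_subset_iff] at hvf
      obtain ⟨w, hw, rfl⟩ := rb_surj (hRB f hf) b
      have hvw : v ≠ w := fun h => hab (by rw [h])
      refine ⟨w, ⟨f, hf, hw, rfl⟩, ?_, hvw, ?_⟩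
      · intro hwW
        exact Finset.disjoint_left.1 hfW hw (mem_erase.2 ⟨hvw.symm, hwW⟩)
      · have h2 := hJ2 _ habJ f hf
        rwa [pr_pair (hRB f hf).2 hvf hw] at h2
    set X : Finset (Fin n) := univ.filter (fun v => ∃ f ∈ R, v ∈ f ∧ (χ v = a ∨ χ v = b)) with hX
    have hXne : X.Nonempty := by
      obtain ⟨e, he⟩ := hRne
      obtain ⟨v, hv, hva⟩ := rb_surj (hRB e he) a
      exact ⟨v, by simp only [hX, mem_filter, mem_univ, true_and]; exact ⟨e, he, hv, Or.inl hva⟩⟩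
    have hs1 : 2 * t + 1 ≤ s := by nlinarith
    obtain ⟨v, _, v2, v3⟩ := greedy_path (d := 2 * t + 1) (KP s R) X hXne (by
      intro v hv W hW
      simp only [hX, mem_filter, mem_univ, true_and] at hv
      obtain ⟨e, he, hve, hv | hv⟩ := hv
      · obtain ⟨w, ⟨f, hf, hwf, hw⟩, h2, h3⟩ := step a b hab ha habJ e he v hve hv W (by omega)
        refine ⟨w, ?_, h2, h3⟩
        simp only [hX, mem_filter, mem_univ, true_and]
        exact ⟨f, hf, hwf, Or.inr hw⟩
      · obtain ⟨w, ⟨f, hf, hwf, hw⟩, h2, h3⟩ := step b a hab.symm hb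
          (by rwa [pair_comm]) e he v hve hv W (by omega)
        refine ⟨w, ?_, h2, h3⟩
        simp only [hX, mem_filter, mem_univ, true_and]
        exact ⟨f, hf, hwf, Or.inl hw⟩) (2 * t + 1) le_rfl
    exact linear_path_of_pairs (by omega) hF v v2 (fun i hi => (v3 i hi).mono (hRG.trans hGF))
      (by nlinarith)

open Classical in
noncomputable def nb {n : ℕ} (s : ℕ) (F : Finset (Finset (Fin n))) (Z : Finset (Fin n)) (x : Fin n) :
    Finset (Fin n) := Z.filter (KP s F x)

lemma count_main (k t s : ℕ) (hk : 4 ≤ k) (hs : 2 * (2 * t + 2) * k ≤ s) :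
    ∃ C : ℕ, ∀ n : ℕ, ∀ F : Finset (Finset (Fin n)), ∀ Z : Finset (Fin n),
      (∀ e ∈ F, e.card = k) → (∀ e ∈ F, e ⊆ Z) → ¬ ContainsLinearPath k (2 * t + 1) F →
      F.card ≤ C * Z.card ^ (k - 2) + ∑ x ∈ Z, (nb s F Z x).card.choose (k - 1) := by
  classical
  obtain ⟨C, hC⟩ := nostar_small k t s hk hs
  refine ⟨C, ?_⟩
  intro n F Z hF hZ hP
  set R := F.filter (fun e => ¬ ∃ x ∈ e, ∀ b ∈ e, b ≠ x → KP s F x b) with hR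
  have hRF : R ⊆ F := filter_subset _ _
  have h1 : R.card ≤ C * Z.card ^ (k - 2) := by
    refine hC n R Z (fun e he => hF e (hRF he)) (fun e he => hZ e (hRF he)) ?_ ?_
    · rintro ⟨P, p1, p2, p3⟩
      exact hP ⟨P, p1, fun i => hRF (p2 i), p3⟩
    · rintro e he ⟨x, hx, hb⟩
      exact (mem_filter.1 he).2 ⟨x, hx, fun b hb' hbx => (hb b hb' hbx).mono hRF⟩
  have h2 : F \ R ⊆ Z.biUnion (fun x => (powersetCard (k - 1) (nb s F Z x)).image (insert x)) := by
    intro e he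
    rw [mem_sdiff] at he
    have : ∃ x ∈ e, ∀ b ∈ e, b ≠ x → KP s F x b := by
      by_contra hc
      exact he.2 (mem_filter.2 ⟨he.1, hc⟩)
    obtain ⟨x, hx, hb⟩ := this
    rw [mem_biUnion]
    refine ⟨x, hZ e he.1 hx, mem_image.2 ⟨e.erase x, ?_, insert_erase hx⟩⟩
    rw [mem_powersetCard]
    refine ⟨?_, by rw [card_erase_of_mem hx, hF e he.1]⟩
    intro b hb'
    rw [mem_erase] at hb'
    rw [nb, mem_filter]
    exact ⟨hZ e he.1 hb'.2, hb b hb'.2 hb'.1⟩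
  have h3 : (F \ R).card ≤ ∑ x ∈ Z, (nb s F Z x).card.choose (k - 1) := by
    refine (card_le_card h2).trans (card_biUnion_le.trans (sum_le_sum fun x _ => ?_))
    exact card_image_le.trans (by rw [card_powersetCard])
  have h4 := card_sdiff_add_card_eq_card hRF
  omega

lemma deg_sum {k t s n : ℕ} (hk : 4 ≤ k) (hs : 2 * (2 * t + 2) * k ≤ s)
    (F : Finset (Finset (Fin n))) (Z : Finset (Fin n))
    (hF : ∀ e ∈ F, e.card = k) (hP : ¬ ContainsLinearPath k (2 * t + 1) F) :
    ∑ x ∈ Z, (nb s F Z x).card ≤ 2 * (2 * t + 1) * Z.card := by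
  refine degenerate (d := 2 * t + 1) (KP s F) (fun _ _ h => h.symm) (fun x h => h.1 rfl) ?_ Z
  rintro ⟨X, hX, h⟩
  obtain ⟨v, _, v2, v3⟩ := greedy_path (KP s F) X hX h (2 * t + 1) le_rfl
  exact hP (linear_path_of_pairs (by omega) hF v v2 v3 (by nlinarith))

lemma crude (k t s : ℕ) (hk : 4 ≤ k) (hs : 2 * (2 * t + 2) * k ≤ s) :
    ∃ C : ℕ, ∀ n : ℕ, ∀ F : Finset (Finset (Fin n)), ∀ Z : Finset (Fin n),
      (∀ e ∈ F, e.card = k) → (∀ e ∈ F, e ⊆ Z) → ¬ ContainsLinearPath k (2 * t + 1) F →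
      F.card ≤ C * Z.card ^ (k - 1) := by
  obtain ⟨C, hC⟩ := count_main k t s hk hs
  classical
  refine ⟨C + 2 * (2 * t + 1), ?_⟩
  intro n F Z hF hZ hP
  have h1 := hC n F Z hF hZ hP
  have h2 := deg_sum hk hs F Z hF hP
  obtain ⟨j, rfl⟩ : ∃ j, k = j + 2 := ⟨k - 2, by omega⟩
  simp only [Nat.add_sub_cancel, show j + 2 - 1 = j + 1 by omega] at h1 ⊢
  have h3 : ∑ x ∈ Z, (nb s F Z x).card.choose (j + 1) ≤ ∑ x ∈ Z, Z.card ^ j * (nb s F Z x).card := by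
    refine sum_le_sum fun x _ => ?_
    refine (Nat.choose_le_pow _ _).trans ?_
    rw [pow_succ]
    exact Nat.mul_le_mul_right _ (Nat.pow_le_pow_left (card_le_card (filter_subset _ _)) _)
  rw [← mul_sum] at h3
  have h4 := Nat.mul_le_mul_left (Z.card ^ j) h2
  rcases Nat.eq_zero_or_pos Z.card with h0 | h0
  · have : F = ∅ := by
      rw [Finset.eq_empty_iff_forall_notMem]
      intro e he
      have h5 := card_le_card (hZ e he)
      rw [hF e he, h0] at h5
      omega
    simp [this]
  · have h5 : C * Z.card ^ j ≤ C * Z.card ^ (j + 1) :=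
      Nat.mul_le_mul_left _ (Nat.pow_le_pow_right h0 (by omega))
    calc F.card ≤ C * Z.card ^ (j + 1) + Z.card ^ j * (2 * (2 * t + 1) * Z.card) := by omega
      _ = _ := by ring

lemma enum {α : Type} [DecidableEq α] [Nonempty α] (T : Finset α) (m : ℕ) (hm : m ≤ T.card) :
    ∃ x : ℕ → α, (∀ i < m, x i ∈ T) ∧ (∀ i < m, ∀ j < m, x i = x j → i = j) := by
  let eq := T.equivFin
  refine ⟨fun i => if h : i < T.card then (eq.symm ⟨i, h⟩ : α) else Classical.arbitrary α, ?_, ?_⟩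
  · intro i hi
    simp only [dif_pos (lt_of_lt_of_le hi hm)]
    exact (eq.symm _).2
  · intro i hi j hj hij
    simp only [dif_pos (lt_of_lt_of_le hi hm), dif_pos (lt_of_lt_of_le hj hm)] at hij
    have := eq.symm.injective (Subtype.ext hij)
    simpa using this

lemma enum_with {α : Type} [DecidableEq α] (T : Finset α) (x₀ : α) (h : x₀ ∈ T) :
    ∃ x : ℕ → α, x 0 = x₀ ∧ (∀ i < T.card, x i ∈ T) ∧
      (∀ i < T.card, ∀ j < T.card, x i = x j → i = j) := by
  have : Nonempty α := ⟨x₀⟩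
  obtain ⟨y, y1, y2⟩ := enum (T.erase x₀) (T.card - 1) (by rw [card_erase_of_mem h])
  refine ⟨fun i => if i = 0 then x₀ else y (i - 1), by simp, ?_, ?_⟩
  · intro i hi
    by_cases h0 : i = 0
    · simp [h0, h]
    · simp only [h0, if_false]; exact mem_of_mem_erase (y1 _ (by omega))
  · intro i hi j hj hij
    by_cases h0 : i = 0 <;> by_cases h1 : j = 0
    · omega
    · simp only [h0, h1, if_true, if_false] at hij
      exact (ne_of_mem_erase (y1 (j - 1) (by omega)) hij.symm).elim
    · simp only [h0, h1, if_true, if_false] at hij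
      exact (ne_of_mem_erase (y1 (i - 1) (by omega)) hij).elim
    · simp only [h0, h1, if_false] at hij
      have := y2 _ (by omega) _ (by omega) hij
      omega

lemma alt_path {α : Type} (adj : α → α → Prop) (hsymm : ∀ x y, adj x y → adj y x)
    (m : ℕ) (x b : ℕ → α) (w : α)
    (hx : ∀ i < m, ∀ j < m, x i = x j → i = j) (hb : ∀ i < m, ∀ j < m, b i = b j → i = j)
    (hxb : ∀ i < m, ∀ j < m, x i ≠ b j) (hwx : ∀ i < m, w ≠ x i) (hwb : ∀ i < m, w ≠ b i)
    (hadj : ∀ i < m, ∀ j < m, adj (x i) (b j)) (hw0 : adj w (x 0)) :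
    ∃ v : ℕ → α, v 0 = w ∧ (∀ i, 1 ≤ i → i ≤ 2 * m → (∃ a < m, v i = x a) ∨ (∃ a < m, v i = b a)) ∧
      (∀ i ≤ 2 * m, ∀ j ≤ 2 * m, v i = v j → i = j) ∧
      (∀ i < 2 * m, adj (v i) (v (i + 1))) := by
  let v : ℕ → α := fun i => if i = 0 then w else if i % 2 = 1 then x (i / 2) else b (i / 2 - 1)
  have v0 : v 0 = w := by simp [v]
  have v1 : ∀ a, v (2 * a + 1) = x a := by
    intro a
    have h1 : (2 * a + 1) % 2 = 1 := by omega
    have h2 : (2 * a + 1) / 2 = a := by omega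
    simp [v, h2]
  have v2 : ∀ a, v (2 * a + 2) = b a := by
    intro a
    have h1 : ¬ (2 * a + 2) % 2 = 1 := by omega
    have h2 : (2 * a + 2) / 2 - 1 = a := by omega
    simp [v, h2]
  have cas : ∀ i, i = 0 ∨ (∃ a, i = 2 * a + 1) ∨ (∃ a, i = 2 * a + 2) := by
    intro i
    rcases Nat.even_or_odd' i with ⟨c, hc | hc⟩
    · rcases Nat.eq_zero_or_pos c with h | h
      · left; omega
      · right; right; exact ⟨c - 1, by omega⟩
    · right; left; exact ⟨c, hc⟩
  refine ⟨v, v0, ?_, ?_, ?_⟩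
  · intro i hi him
    rcases cas i with rfl | ⟨a, rfl⟩ | ⟨a, rfl⟩
    · omega
    · left; exact ⟨a, by omega, v1 a⟩
    · right; exact ⟨a, by omega, v2 a⟩
  · intro i hi j hj
    rcases cas i with rfl | ⟨a, rfl⟩ | ⟨a, rfl⟩ <;> rcases cas j with rfl | ⟨c, rfl⟩ | ⟨c, rfl⟩
    · intro _; rfl
    · rw [v0, v1]; intro h; exact (hwx c (by omega) h).elim
    · rw [v0, v2]; intro h; exact (hwb c (by omega) h).elim
    · rw [v0, v1]; intro h; exact (hwx a (by omega) h.symm).elim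
    · rw [v1, v1]; intro h; have := hx a (by omega) c (by omega) h; omega
    · rw [v1, v2]; intro h; exact (hxb a (by omega) c (by omega) h).elim
    · rw [v0, v2]; intro h; exact (hwb a (by omega) h.symm).elim
    · rw [v1, v2]; intro h; exact (hxb c (by omega) a (by omega) h.symm).elim
    · rw [v2, v2]; intro h; have := hb a (by omega) c (by omega) h; omega
  · intro i hi
    rcases cas i with rfl | ⟨a, rfl⟩ | ⟨a, rfl⟩
    · have := v1 0
      simp only [mul_zero, zero_add] at this ⊢
      rw [v0, this]; exact hw0
    · rw [v1, show 2 * a + 1 + 1 = 2 * a + 2 by ring, v2]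
      exact hadj a (by omega) a (by omega)
    · rw [v2, show 2 * a + 2 + 1 = 2 * (a + 1) + 1 by ring, v1]
      exact hsymm _ _ (hadj _ (by omega) _ (by omega))

open Classical in
lemma common_small {k t s n : ℕ} (hk : 4 ≤ k) (hs : 2 * (2 * t + 2) * k ≤ s)
    (F : Finset (Finset (Fin n)))
    (hF : ∀ e ∈ F, e.card = k) (hP : ¬ ContainsLinearPath k (2 * t + 1) F)
    (T : Finset (Fin n)) (hT : T.card = t + 1) (hdeg : ∀ x ∈ T, 2 * t + 3 ≤ (nb s F univ x).card) :
    (univ.filter (fun v => ∀ x ∈ T, KP s F x v)).card ≤ t := by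
  by_contra hcon
  push Not at hcon
  obtain ⟨x₀, hx₀⟩ := card_pos.1 (show 0 < T.card by omega)
  have : Nonempty (Fin n) := ⟨x₀⟩
  obtain ⟨x, x1, x2, x3⟩ := enum_with T x₀ hx₀
  rw [hT] at x2 x3
  obtain ⟨b, b1, b2⟩ := enum (univ.filter (fun v => ∀ x ∈ T, KP s F x v)) (t + 1) hcon
  have hb : ∀ i < t + 1, ∀ x ∈ T, KP s F x (b i) := fun i hi => (mem_filter.1 (b1 i hi)).2
  obtain ⟨w, hw, hwn⟩ := Finset.exists_mem_notMem_of_card_lt_card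
    (s := T ∪ (range (t + 1)).image b) (t := nb s F univ x₀) (by
      have h1 := card_union_le T ((range (t + 1)).image b)
      have h2 : ((range (t + 1)).image b).card ≤ t + 1 := card_image_le.trans (by simp)
      have h3 := hdeg x₀ hx₀
      omega)
  rw [mem_union, not_or] at hwn
  have hwK : KP s F x₀ w := (mem_filter.1 hw).2
  obtain ⟨v, _, _, v2, v3⟩ := alt_path (KP s F) (fun _ _ h => h.symm) (t + 1) x b w x3 b2
    (fun i hi j hj => (hb j hj _ (x2 i hi)).1)
    (fun i hi h => hwn.1 (h ▸ x2 i hi))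
    (fun i hi h => hwn.2 (mem_image.2 ⟨i, mem_range.2 hi, h.symm⟩))
    (fun i hi j hj => hb j hj _ (x2 i hi)) (by rw [x1]; exact hwK.symm)
  exact hP (linear_path_of_pairs (by omega) hF v
    (fun i hi j hj => v2 i (by omega) j (by omega)) (fun i hi => v3 i (by omega)) (by nlinarith))

lemma heavy_sum {k t s n : ℕ} (hk : 4 ≤ k) (hs : 2 * (2 * t + 2) * k ≤ s)
    (F : Finset (Finset (Fin n)))
    (hF : ∀ e ∈ F, e.card = k) (hP : ¬ ContainsLinearPath k (2 * t + 1) F)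
    (L : Finset (Fin n)) (hdeg : ∀ x ∈ L, 2 * t + 3 ≤ (nb s F univ x).card) :
    ∑ x ∈ L, (nb s F univ x).card ≤ t * n + 2 ^ L.card * t * L.card := by
  classical
  have h1 : ∑ x ∈ L, (nb s F univ x).card = ∑ v : Fin n, (L.filter (fun x => KP s F x v)).card := by
    simp only [nb, card_filter]
    rw [sum_comm]
  set Bad := (powersetCard (t + 1) L).biUnion (fun T => univ.filter (fun v => ∀ x ∈ T, KP s F x v))
    with hBad
  have h2 : Bad.card ≤ 2 ^ L.card * t := by
    refine card_biUnion_le.trans ?_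
    refine (sum_le_card_nsmul _ _ t ?_).trans ?_
    · intro T hT
      rw [mem_powersetCard] at hT
      exact common_small hk hs F hF hP T hT.2 (fun x hx => hdeg x (hT.1 hx))
    · rw [smul_eq_mul, card_powersetCard]
      exact Nat.mul_le_mul_right _ (Nat.choose_le_two_pow _ _)
  have h3 : ∀ v : Fin n, (L.filter (fun x => KP s F x v)).card ≤
      t + if v ∈ Bad then L.card else 0 := by
    intro v
    split_ifs with h
    · exact (card_le_card (filter_subset _ _)).trans (by omega)
    · by_contra hc
      push Not at hc
      obtain ⟨T, hT, hTc⟩ := Finset.exists_subset_card_eq (show t + 1 ≤ _ from hc)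
      apply h
      rw [hBad, mem_biUnion]
      refine ⟨T, mem_powersetCard.2 ⟨hT.trans (filter_subset _ _), hTc⟩, ?_⟩
      simp only [mem_filter, mem_univ, true_and]
      exact fun x hx => (mem_filter.1 (hT hx)).2
  rw [h1]
  refine (sum_le_sum (fun v _ => h3 v)).trans ?_
  rw [sum_add_distrib, sum_const, ← sum_filter, sum_const]
  simp only [smul_eq_mul, card_univ, Fintype.card_fin, filter_mem_eq_inter, univ_inter]
  have := Nat.mul_le_mul_right L.card h2
  have : n * t = t * n := mul_comm _ _
  omega

/-- main analytic inequality -/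
lemma numeric1 {j t c C p n : ℕ} (hp : 1 ≤ p) (hn : t + j + 4 ≤ n) (d : Fin n → ℕ) (hd : ∀ x, d x ≤ n)
    (hsum : ∑ x, d x ≤ c * n)
    (hF : ∑ i ∈ Icc 1 t, (n - i).choose (j + 3) ≤ C * n ^ (j + 2) + ∑ x, (d x).choose (j + 3)) :
    (t : ℝ) * n ^ 2 ≤ (c / p ^ 2 : ℝ) * n ^ 2 +
      ((j + 3).factorial * C + t * (j + 3) * (t + j + 2) : ℕ) * n +
      ∑ x ∈ univ.filter (fun x => n ≤ p * d x), (d x : ℝ) ^ 2 := by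
  have hn0 : (0 : ℝ) < n := by exact_mod_cast (show 0 < n by omega)
  have hp0 : (0 : ℝ) < p := by exact_mod_cast hp
  set g : ℕ := t + j + 2 with hg
  set f : ℕ := (j + 3).factorial with hf
  -- lower bound
  have low : ∀ i ∈ Icc 1 t, (n : ℝ) ^ (j + 3) - (j + 3) * g * n ^ (j + 2) ≤
      f * ((n - i).choose (j + 3) : ℝ) := by
    intro i hi
    rw [mem_Icc] at hi
    have h1 : (n - g) ^ (j + 3) ≤ f * (n - i).choose (j + 3) := by
      rw [hf, ← Nat.descFactorial_eq_factorial_mul_choose]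
      refine (Nat.pow_le_pow_left ?_ _).trans (Nat.pow_sub_le_descFactorial (n - i) (j + 3))
      omega
    have h2 : ((n : ℝ) - g) ^ (j + 3) ≤ f * ((n - i).choose (j + 3) : ℝ) := by
      have : ((n - g : ℕ) : ℝ) = (n : ℝ) - g := by
        rw [Nat.cast_sub (by omega)]
      rw [← this]; exact_mod_cast h1
    refine le_trans ?_ h2
    have hgn : (g : ℝ) ≤ n := by exact_mod_cast (show g ≤ n by omega)
    have h3 := one_add_mul_le_pow (a := -(g / n : ℝ)) (by
      have : (g / n : ℝ) ≤ 1 := by rw [div_le_one hn0]; exact hgn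
      linarith) (j + 3)
    have h4 := mul_le_mul_of_nonneg_left h3 (pow_nonneg hn0.le (j + 3))
    rw [← mul_pow] at h4
    have e1 : (n : ℝ) * (1 + -(g / n : ℝ)) = n - g := by field_simp; ring
    have e2 : (n : ℝ) ^ (j + 3) * (1 + ((j + 3 : ℕ) : ℝ) * -(g / n : ℝ)) =
        (n : ℝ) ^ (j + 3) - (j + 3) * g * n ^ (j + 2) := by
      rw [pow_succ]; push_cast; field_simp; ring
    rw [e1, e2] at h4
    exact h4
  have low2 := sum_le_sum low
  rw [sum_const, ← mul_sum, Nat.card_Icc, nsmul_eq_mul, Nat.add_sub_cancel] at low2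
  have hF' : (∑ i ∈ Icc 1 t, ((n - i).choose (j + 3) : ℝ)) ≤
      C * n ^ (j + 2) + ∑ x, ((d x).choose (j + 3) : ℝ) := by exact_mod_cast hF
  have up : ∀ x, (f : ℝ) * ((d x).choose (j + 3) : ℝ) ≤ (d x : ℝ) ^ (j + 3) := by
    intro x
    have : f * (d x).choose (j + 3) ≤ (d x) ^ (j + 3) := by
      rw [hf, ← Nat.descFactorial_eq_factorial_mul_choose]
      exact Nat.descFactorial_le_pow _ _
    exact_mod_cast this
  have hdn : ∀ x, (d x : ℝ) ≤ n := fun x => by exact_mod_cast hd x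
  have up2 : ∀ x, (d x : ℝ) ^ (j + 3) ≤ n ^ (j + 1) * ((n / p ^ 2 : ℝ) * d x +
      if n ≤ p * d x then (d x : ℝ) ^ 2 else 0) := by
    intro x
    have hd0 : (0 : ℝ) ≤ d x := Nat.cast_nonneg _
    split_ifs with h
    · calc (d x : ℝ) ^ (j + 3) = (d x : ℝ) ^ (j + 1) * (d x : ℝ) ^ 2 := by ring
        _ ≤ n ^ (j + 1) * (d x : ℝ) ^ 2 := by gcongr; exact hd x
        _ ≤ _ := by
          gcongr
          have : (0 : ℝ) ≤ (n / p ^ 2 : ℝ) * d x := by positivity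
          linarith
    · push Not at h
      have h1 : (p : ℝ) * d x ≤ n := by exact_mod_cast h.le
      have h2 : (d x : ℝ) ≤ n / p := by rw [le_div_iff₀ hp0]; linarith
      calc (d x : ℝ) ^ (j + 3) = (d x : ℝ) ^ j * (d x : ℝ) ^ 2 * d x := by ring
        _ ≤ n ^ j * (n / p) ^ 2 * d x := by gcongr; exact hd x
        _ = _ := by rw [add_zero]; field_simp; ring
  have tot : (t : ℝ) * (n ^ (j + 3) - (j + 3) * g * n ^ (j + 2)) ≤
      f * C * n ^ (j + 2) + n ^ (j + 1) * ((c / p ^ 2 : ℝ) * n ^ 2 +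
        ∑ x ∈ univ.filter (fun x => n ≤ p * d x), (d x : ℝ) ^ 2) := by
    calc _ ≤ (f : ℝ) * ∑ i ∈ Icc 1 t, ((n - i).choose (j + 3) : ℝ) := low2
      _ ≤ f * (C * n ^ (j + 2) + ∑ x, ((d x).choose (j + 3) : ℝ)) := by gcongr
      _ = f * C * n ^ (j + 2) + ∑ x, (f : ℝ) * ((d x).choose (j + 3) : ℝ) := by
        rw [mul_add, mul_sum]; ring
      _ ≤ f * C * n ^ (j + 2) + ∑ x, (n : ℝ) ^ (j + 1) * ((n / p ^ 2 : ℝ) * d x +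
          if n ≤ p * d x then (d x : ℝ) ^ 2 else 0) := by
        have := sum_le_sum (fun x (_ : x ∈ (univ : Finset (Fin n))) => (up x).trans (up2 x))
        linarith
      _ = f * C * n ^ (j + 2) + (n : ℝ) ^ (j + 1) * ((n / p ^ 2 : ℝ) * ∑ x, (d x : ℝ) +
          ∑ x ∈ univ.filter (fun x => n ≤ p * d x), (d x : ℝ) ^ 2) := by
        rw [← mul_sum, sum_add_distrib, ← mul_sum, sum_filter]
      _ ≤ _ := by
        have h1 : (∑ x, (d x : ℝ)) ≤ c * n := by exact_mod_cast hsum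
        have h2 : (n / p ^ 2 : ℝ) * ∑ x, (d x : ℝ) ≤ (c / p ^ 2 : ℝ) * n ^ 2 := by
          calc _ ≤ (n / p ^ 2 : ℝ) * (c * n) := by gcongr
            _ = _ := by ring
        gcongr
  have hnp : (0 : ℝ) < n ^ (j + 1) := by positivity
  refine le_of_mul_le_mul_left ?_ hnp
  push_cast
  have e1 : (n : ℝ) ^ (j + 3) = n ^ (j + 1) * n ^ 2 := by ring
  have e2 : (n : ℝ) ^ (j + 2) = n ^ (j + 1) * n := by ring
  have e3 : (g : ℝ) = t + j + 2 := by rw [hg]; push_cast; ring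
  rw [e1, e2, e3] at tot
  rw [e3]
  linarith [tot]

set_option maxHeartbeats 1600000 in
lemma numeric2 {t c q C1 C2 p n : ℕ} (hc : 1 ≤ c) (hq : 2 * (t + 1) ≤ q) (hp : p = 2 * c * q)
    (hn : (C1 + C2) * p ^ 2 + 2 * C2 + 2 * C1 < n)
    (d : Fin n → ℕ) (hd : ∀ x, d x ≤ n) (L : Finset (Fin n)) (hL : ∀ x ∈ L, n ≤ p * d x)
    (h1 : (t : ℝ) * n ^ 2 ≤ (c / p ^ 2 : ℝ) * n ^ 2 + C1 * n + ∑ x ∈ L, (d x : ℝ) ^ 2)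
    (h2 : ∑ x ∈ L, d x ≤ t * n + C2) :
    L.card = t ∧ ∀ x ∈ L, q * (n - d x) ≤ n := by
  have hn0 : (0 : ℝ) < n := by exact_mod_cast (show 0 < n by omega)
  have hc0 : (1 : ℝ) ≤ c := by exact_mod_cast hc
  have hq2 : (2 * (t + 1) : ℝ) ≤ q := by exact_mod_cast hq
  have ht0 : (0 : ℝ) ≤ t := Nat.cast_nonneg _
  have hq0 : (0 : ℝ) < q := by linarith
  have hpr : (p : ℝ) = 2 * c * q := by exact_mod_cast hp
  have hp0 : (0 : ℝ) < p := by rw [hpr]; positivity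
  have hnr : ((C1 + C2) * p ^ 2 + 2 * C2 + 2 * C1 : ℝ) < n := by exact_mod_cast hn
  have hC1 : (0 : ℝ) ≤ C1 := Nat.cast_nonneg _
  have hC2 : (0 : ℝ) ≤ C2 := Nat.cast_nonneg _
  have hdn : ∀ x, (d x : ℝ) ≤ n := fun x => by exact_mod_cast hd x
  have h2r : (∑ x ∈ L, (d x : ℝ)) ≤ t * n + C2 := by exact_mod_cast h2
  have hA : ∑ x ∈ L, (d x : ℝ) * (n - d x) ≤ (c / p ^ 2 : ℝ) * n ^ 2 + (C1 + C2) * n := by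
    have : ∑ x ∈ L, (d x : ℝ) * (n - d x) = n * ∑ x ∈ L, (d x : ℝ) - ∑ x ∈ L, (d x : ℝ) ^ 2 := by
      rw [mul_sum, ← sum_sub_distrib]
      exact sum_congr rfl (fun x _ => by ring)
    rw [this]
    nlinarith [mul_le_mul_of_nonneg_left h2r hn0.le]
  have hB : ∀ x ∈ L, (q : ℝ) * (n - d x) ≤ n := by
    intro x hx
    by_contra hcon
    push Not at hcon
    have b1 : (d x : ℝ) * (n - d x) ≤ ∑ x ∈ L, (d x : ℝ) * (n - d x) :=
      single_le_sum (f := fun x => (d x : ℝ) * (n - d x))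
        (fun y _ => mul_nonneg (Nat.cast_nonneg _) (sub_nonneg.2 (hdn y))) hx
    have b2 : (n : ℝ) ≤ p * d x := by exact_mod_cast hL x hx
    have b3 : (n : ℝ) * n ≤ (p * d x) * (q * (n - d x)) :=
      mul_le_mul b2 hcon.le hn0.le (by positivity)
    have b4 := b1.trans hA
    have b5 : (p : ℝ) * q * (d x * (n - d x)) ≤ p * q * ((c / p ^ 2 : ℝ) * n ^ 2 + (C1 + C2) * n) :=
      mul_le_mul_of_nonneg_left b4 (by positivity)
    have b6 : (p : ℝ) * q * ((c / p ^ 2 : ℝ) * n ^ 2) = n ^ 2 / 2 := by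
      rw [hpr]; field_simp
    have b7 : (n : ℝ) ^ 2 / 2 ≤ p * q * ((C1 + C2) * n) := by
      rw [mul_add, b6] at b5
      nlinarith
    have b8 : (n : ℝ) / 2 ≤ p * q * (C1 + C2) := by
      refine le_of_mul_le_mul_right ?_ hn0
      nlinarith
    have b9 : 2 * (p : ℝ) * q * (C1 + C2) ≤ p ^ 2 * (C1 + C2) := by
      have : 2 * (q : ℝ) ≤ p := by rw [hpr]; nlinarith
      have h3 : (0 : ℝ) ≤ p * (C1 + C2) := by positivity
      nlinarith
    nlinarith
  refine ⟨?_, ?_⟩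
  · apply le_antisymm
    · by_contra hcon
      push Not at hcon
      have c1 : (t + 1 : ℝ) ≤ L.card := by exact_mod_cast hcon
      have c2 : (L.card : ℝ) * ((q - 1) * n) ≤ q * ∑ x ∈ L, (d x : ℝ) := by
        rw [mul_sum, ← nsmul_eq_mul]
        refine card_nsmul_le_sum _ _ _ ?_
        intro x hx
        have := hB x hx
        linarith only [this]
      have c3 : (t + 1 : ℝ) * ((q - 1) * n) ≤ q * (t * n + C2) := by
        refine le_trans ?_ (c2.trans (mul_le_mul_of_nonneg_left h2r hq0.le))
        refine mul_le_mul_of_nonneg_right c1 ?_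
        refine mul_nonneg ?_ hn0.le
        linarith
      have c4 : (q : ℝ) * n ≤ (t + 1) * n + q * C2 := by linarith [c3]
      have c5 : 2 * (t + 1) * (n : ℝ) ≤ q * n := mul_le_mul_of_nonneg_right hq2 hn0.le
      have c6 : (q : ℝ) * n ≤ q * (2 * C2) := by linarith
      have c7 := le_of_mul_le_mul_left c6 hq0
      have c8 := mul_nonneg (add_nonneg hC1 hC2) (sq_nonneg (p : ℝ))
      linarith
    · by_contra hcon
      push Not at hcon
      have c1 : (L.card : ℝ) + 1 ≤ t := by exact_mod_cast hcon
      have c2 : ∑ x ∈ L, (d x : ℝ) ^ 2 ≤ L.card * (n : ℝ) ^ 2 := by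
        rw [← nsmul_eq_mul]
        refine sum_le_card_nsmul _ _ _ ?_
        intro x _
        exact pow_le_pow_left₀ (Nat.cast_nonneg _) (hdn x) 2
      have c3 : (c / p ^ 2 : ℝ) ≤ 1 / 2 := by
        rw [div_le_iff₀ (by positivity), hpr]
        have h3 : (1 : ℝ) ≤ q := by linarith
        have h4 : (1 : ℝ) ≤ q ^ 2 := one_le_pow₀ h3
        have h5 : (c : ℝ) * 1 ≤ c * (c * q ^ 2) :=
          mul_le_mul_of_nonneg_left (one_le_mul_of_one_le_of_one_le hc0 h4) (by linarith)
        linarith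
      have hnn : (0 : ℝ) < (n : ℝ) ^ 2 := by positivity
      have c4 : (c / p ^ 2 : ℝ) * n ^ 2 ≤ 1 / 2 * n ^ 2 := mul_le_mul_of_nonneg_right c3 hnn.le
      have c9 : ((L.card : ℝ) + 1) * n ^ 2 ≤ t * n ^ 2 := mul_le_mul_of_nonneg_right c1 hnn.le
      have c5 : (n : ℝ) ^ 2 ≤ 2 * C1 * n := by linarith
      have c6 : (n : ℝ) ≤ 2 * C1 := by
        refine le_of_mul_le_mul_right ?_ hn0
        linarith
      have c8 := mul_nonneg (add_nonneg hC1 hC2) (sq_nonneg (p : ℝ))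
      linarith
  · intro x hx
    have := hB x hx
    rw [← Nat.cast_sub (hd x)] at this
    exact_mod_cast this

lemma pascal_sum (n k t : ℕ) (hk : 1 ≤ k) (ht : t ≤ n) :
    ∑ i ∈ Icc 1 t, (n - i).choose (k - 1) + (n - t).choose k = n.choose k := by
  induction t with
  | zero => simp
  | succ t ih =>
    rw [sum_Icc_succ_top (by omega)]
    have h := ih (by omega)
    obtain ⟨m, hm⟩ : ∃ m, n - t = m + 1 := ⟨n - t - 1, by omega⟩
    obtain ⟨l, rfl⟩ : ∃ l, k = l + 1 := ⟨k - 1, by omega⟩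
    rw [hm, Nat.choose_succ_succ'] at h
    rw [show n - (t + 1) = m by omega]
    simp only [Nat.add_sub_cancel] at h ⊢
    omega

lemma star_card {n : ℕ} (k t : ℕ) (hk : 1 ≤ k) (S : Finset (Fin n)) (hS : S.card = t) :
    ((powersetCard k univ).filter (fun A => (A ∩ S).Nonempty)).card
      = ∑ i ∈ Icc 1 t, (n - i).choose (k - 1) := by
  have ht : t ≤ n := by
    rw [← hS]; simpa using card_le_univ S
  have h1 := pascal_sum n k t hk ht
  have h2 : (powersetCard k (univ : Finset (Fin n))).filter (fun A => ¬ (A ∩ S).Nonempty)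
      = powersetCard k Sᶜ := by
    ext A
    simp only [mem_filter, mem_powersetCard, not_nonempty_iff_eq_empty, ← disjoint_iff_inter_eq_empty,
      subset_univ, true_and, subset_compl_iff_disjoint_right]
    tauto
  have h3 := card_filter_add_card_filter_not (s := powersetCard k (univ : Finset (Fin n)))
    (fun A => (A ∩ S).Nonempty)
  rw [h2, card_powersetCard, card_powersetCard, card_compl, hS] at h3
  simp only [card_univ, Fintype.card_fin] at h3
  omega

lemma missing_lower {n k t s : ℕ} (hk : 4 ≤ k) (F : Finset (Finset (Fin n))) (S Z : Finset (Fin n))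
    (hS : S.card = t) (x : Fin n) (hx : x ∈ S) (hZS : Disjoint Z S)
    (hZ : ∀ u ∈ Z, ¬ KP s F x u) :
    Z.card * (n - Z.card - t - s).choose (k - 2) ≤
      ((powersetCard k univ).filter (fun A => (A ∩ S).Nonempty) \ F).card := by
  classical
  have hW : ∀ u : Fin n, ∃ W : Finset (Fin n), W.card ≤ s ∧
      (u ∈ Z → Disjoint W {x, u} ∧ ∀ e ∈ F, ({x, u} : Finset (Fin n)) ⊆ e → ¬ Disjoint e W) := by
    intro u
    by_cases hu : u ∈ Z
    · have h1 := hZ u hu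
      have hne : x ≠ u := fun h => (disjoint_left.1 hZS hu) (h ▸ hx)
      have h2 : ¬ Ker s F {x, u} := fun h => h1 ⟨hne, h⟩
      unfold Ker at h2
      push Not at h2
      obtain ⟨W, w1, w2, w3⟩ := h2
      exact ⟨W, w1, fun _ => ⟨w2, w3⟩⟩
    · exact ⟨∅, by simp, fun h => (hu h).elim⟩
  choose W w1 w2 using hW
  have h1 : (Z.sigma (fun u => powersetCard (k - 2) (univ \ (Z ∪ S ∪ W u)))).card ≤
      ((powersetCard k univ).filter (fun A => (A ∩ S).Nonempty) \ F).card := by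
    refine card_le_card_of_injOn (fun a => insert x (insert a.1 a.2)) ?_ ?_
    · rintro ⟨u, Y⟩ h
      simp only [coe_sigma, Set.mem_sigma_iff, mem_coe, mem_powersetCard] at h
      obtain ⟨hu, hY, hc⟩ := h
      have hne : x ≠ u := fun h => (disjoint_left.1 hZS hu) (h ▸ hx)
      have a1 : ∀ y ∈ Y, y ∉ Z ∧ y ∉ S ∧ y ∉ W u := by
        intro y hy
        have := hY hy
        simpa [not_or] using this
      have a2 : u ∉ Y := fun h => (a1 u h).1 hu
      have a3 : x ∉ insert u Y := by
        rw [mem_insert]; rintro (h | h)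
        · exact hne h
        · exact (a1 x h).2.1 hx
      simp only [coe_sdiff, Set.mem_sdiff, mem_coe, mem_filter, mem_powersetCard, subset_univ, true_and]
      refine ⟨⟨?_, ⟨x, by simp [hx]⟩⟩, ?_⟩
      · rw [card_insert_of_notMem a3, card_insert_of_notMem a2, hc]; omega
      · intro hF
        obtain ⟨c1, c2⟩ := w2 u hu
        refine c2 _ hF ?_ ?_
        · intro y hy
          simp only [mem_insert, mem_singleton] at hy ⊢
          tauto
        · rw [disjoint_left]
          intro y hy hyW
          simp only [mem_insert] at hy
          have c3 := disjoint_left.1 c1 hyW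
          simp only [mem_insert, mem_singleton, not_or] at c3
          rcases hy with h | h | h
          · exact c3.1 h
          · exact c3.2 h
          · exact (a1 y h).2.2 hyW
    · rintro ⟨u, Y⟩ h ⟨u', Y'⟩ h' heq
      simp only [coe_sigma, Set.mem_sigma_iff, mem_coe, mem_powersetCard] at h h'
      obtain ⟨hu, hY, hc⟩ := h
      obtain ⟨hu', hY', hc'⟩ := h'
      have a1 : ∀ y ∈ Y, y ∉ Z ∧ y ∉ S := by
        intro y hy
        have := hY hy
        simp [not_or] at this
        tauto
      have a1' : ∀ y ∈ Y', y ∉ Z ∧ y ∉ S := by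
        intro y hy
        have := hY' hy
        simp [not_or] at this
        tauto
      simp only at heq
      have hxZ : x ∉ Z := fun h => disjoint_left.1 hZS h hx
      have e1 : u = u' := by
        have : u ∈ insert x (insert u' Y') := by rw [← heq]; simp
        simp only [mem_insert] at this
        rcases this with h | h | h
        · exact (hxZ (h ▸ hu)).elim
        · exact h
        · exact ((a1' u h).1 hu).elim
      subst e1
      have e2 : Y = Y' := by
        ext y
        constructor
        · intro hy
          have : y ∈ insert x (insert u Y') := by rw [← heq]; simp [hy]
          simp only [mem_insert] at this
          rcases this with h | h | h
          · exact ((a1 y hy).2 (h ▸ hx)).elim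
          · exact ((a1 y hy).1 (h ▸ hu)).elim
          · exact h
        · intro hy
          have : y ∈ insert x (insert u Y) := by rw [heq]; simp [hy]
          simp only [mem_insert] at this
          rcases this with h | h | h
          · exact ((a1' y hy).2 (h ▸ hx)).elim
          · exact ((a1' y hy).1 (h ▸ hu)).elim
          · exact h
      rw [e2]
  refine le_trans ?_ h1
  rw [card_sigma, ← smul_eq_mul]
  refine card_nsmul_le_sum _ _ _ ?_
  intro u hu
  rw [card_powersetCard]
  refine Nat.choose_le_choose _ ?_
  have b1 := le_card_sdiff (Z ∪ S ∪ W u) univ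
  simp only [card_univ, Fintype.card_fin] at b1
  have b2 := card_union_le (Z ∪ S) (W u)
  have b3 := card_union_le Z S
  have b4 := w1 u
  omega

lemma numeric3 {n z t s j C0 q : ℕ} (hq : q = 2 * (C0 + 1) * (j + 2).factorial * (t + 1))
    (hz : 1 ≤ z) (hqz : 4 * q * z ≤ n) (hn : 4 * (t + s + j + 2) ≤ n) :
    C0 * z ^ (j + 3) < z * (n - z - t - s).choose (j + 2) := by
  have hf : 1 ≤ (j + 2).factorial := Nat.factorial_pos _
  have hq2 : (C0 + 1) * (j + 2).factorial ≤ q := by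
    rw [hq]; nlinarith [Nat.zero_le ((C0 + 1) * (j + 2).factorial * t)]
  have hq1 : 2 ≤ q := by
    have : 1 ≤ (C0 + 1) * (j + 2).factorial * (t + 1) := Nat.mul_pos (Nat.mul_pos (by omega) hf) (by omega)
    rw [hq]; nlinarith
  have hz8 : 8 * z ≤ n := le_trans (Nat.mul_le_mul_right z (by omega)) hqz
  set M := n - z - t - s with hM
  have h1 : n ≤ 4 * (M + 1 - (j + 2)) := by omega
  have h2 : q * z ≤ M + 1 - (j + 2) := by nlinarith
  have h3 := Nat.pow_sub_le_descFactorial M (j + 2)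
  rw [Nat.descFactorial_eq_factorial_mul_choose] at h3
  have h4 := (Nat.pow_le_pow_left h2 (j + 2)).trans h3
  rw [mul_pow] at h4
  have h5 : q ≤ q ^ (j + 2) := Nat.le_self_pow (by omega) q
  have h6 : (C0 + 1) * (j + 2).factorial * z ^ (j + 2) ≤ (j + 2).factorial * M.choose (j + 2) :=
    (Nat.mul_le_mul_right _ (hq2.trans h5)).trans h4
  have h7 : (C0 + 1) * z ^ (j + 2) ≤ M.choose (j + 2) := by
    refine Nat.le_of_mul_le_mul_left ?_ hf
    linarith
  have h8 : 0 < z ^ (j + 2) := by positivity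
  calc C0 * z ^ (j + 3) = z * (C0 * z ^ (j + 2)) := by ring
    _ < z * M.choose (j + 2) := by
      refine Nat.mul_lt_mul_of_pos_left ?_ hz
      linarith

lemma edges_in_Z {n k t s q : ℕ} (hk : 4 ≤ k) (ht : 1 ≤ t) (hs : 2 * (2 * t + 2) * k ≤ s)
    (F : Finset (Finset (Fin n))) (hF : ∀ e ∈ F, e.card = k)
    (hP : ¬ ContainsLinearPath k (2 * t + 1) F)
    (S : Finset (Fin n)) (hS : S.card = t) (hq : 2 * (t + 1) ≤ q)
    (hd : ∀ x ∈ S, q * (n - (nb s F univ x).card) ≤ n) (hn : 2 * (k + t) ≤ n)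
    (e : Finset (Fin n)) (he : e ∈ F) (heS : Disjoint e S) (u : Fin n) (hu : u ∈ e) (x₀ : Fin n)
    (hx₀ : x₀ ∈ S) : ¬ KP s F x₀ u := by
  classical
  intro hK
  obtain ⟨x, x0, x1, x2⟩ := enum_with S x₀ hx₀
  rw [hS] at x1 x2
  set T := univ \ (e ∪ S.biUnion (fun x => univ \ nb s F univ x)) with hT
  have hTc : t ≤ T.card := by
    have b1 := le_card_sdiff (e ∪ S.biUnion (fun x => univ \ nb s F univ x)) univ
    simp only [card_univ, Fintype.card_fin] at b1
    have b2 := card_union_le e (S.biUnion (fun x => univ \ nb s F univ x))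
    have b3 : q * (S.biUnion (fun x => univ \ nb s F univ x)).card ≤ t * n := by
      refine (Nat.mul_le_mul_left q card_biUnion_le).trans ?_
      rw [mul_sum, ← hS, ← smul_eq_mul]
      refine sum_le_card_nsmul _ _ _ ?_
      intro y hy
      rw [card_sdiff_of_subset (subset_univ _), card_univ, Fintype.card_fin]
      exact hd y hy
    have b4 : 2 * (S.biUnion (fun x => univ \ nb s F univ x)).card ≤ n := by
      have : 2 * (t + 1) * (S.biUnion (fun x => univ \ nb s F univ x)).card ≤ t * n :=
        (Nat.mul_le_mul_right _ hq).trans b3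
      refine Nat.le_of_mul_le_mul_left (c := t + 1) ?_ (by omega)
      nlinarith
    have b5 := hF e he
    rw [← hT] at b1
    omega
  have : Nonempty (Fin n) := ⟨u⟩
  obtain ⟨b, b1, b2⟩ := enum T t hTc
  have bT : ∀ i < t, b i ∉ e ∧ ∀ y ∈ S, KP s F y (b i) := by
    intro i hi
    have h := b1 i hi
    simp only [hT, mem_sdiff, mem_univ, true_and, mem_union, mem_biUnion, not_or, not_exists, not_and,
      not_not, nb, mem_filter] at h
    exact h
  have huS : ∀ y ∈ S, y ∉ e := fun y hy hye => disjoint_left.1 heS hye hy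
  obtain ⟨v, v0, v1, v2, v3⟩ := alt_path (KP s F) (fun _ _ h => h.symm) t x b u x2 b2
    (fun i hi j hj h => ((bT j hj).2 _ (x1 i hi)).1 h)
    (fun i hi h => huS _ (x1 i hi) (h ▸ hu)) (fun i hi h => (bT i hi).1 (h ▸ hu))
    (fun i hi j hj => (bT j hj).2 _ (x1 i hi)) (by rw [x0]; exact hK.symm)
  refine hP (linear_path_of_edge_pairs (m := 2 * t) (by omega) hF e he v v2 (by rw [v0]; exact hu) ?_ v3
    (by nlinarith))
  intro i hi hi'
  rcases v1 i hi hi' with ⟨a, ha, h⟩ | ⟨a, ha, h⟩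
  · rw [h]; exact huS _ (x1 a ha)
  · rw [h]; exact (bT a ha).1

/-- Uniqueness of the extremal family for `P^{(k)}_{2t+1}`: an extremal family consists of
all k-subsets of [n] meeting a fixed t-set S. -/
theorem turan_linear_path_odd_extremal (k t : ℕ) (hk : 4 ≤ k) (ht : 1 ≤ t) :
    ∃ n₀ : ℕ, ∀ n : ℕ, n₀ ≤ n → ∀ F : Finset (Finset (Fin n)),
      (∀ A ∈ F, A.card = k) → ¬ ContainsLinearPath k (2 * t + 1) F →
      F.card = ∑ i ∈ Finset.Icc 1 t, (n - i).choose (k - 1) →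
      ∃ S : Finset (Fin n), S.card = t ∧
        F = (Finset.powersetCard k Finset.univ).filter (fun A => (A ∩ S).Nonempty) := by
  classical
  obtain ⟨s, hsd⟩ : ∃ s, s = 2 * (2 * t + 2) * k := ⟨_, rfl⟩
  have hs : 2 * (2 * t + 2) * k ≤ s := hsd.ge
  obtain ⟨C, hC⟩ := count_main k t s hk hs
  obtain ⟨C0, hC0⟩ := crude k t s hk hs
  obtain ⟨j, rfl⟩ : ∃ j, k = j + 4 := ⟨k - 4, by omega⟩
  obtain ⟨c, hc⟩ : ∃ c, c = 2 * (2 * t + 1) := ⟨_, rfl⟩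
  obtain ⟨q', hq'⟩ : ∃ q, q = 2 * (C0 + 1) * (j + 2).factorial * (t + 1) := ⟨_, rfl⟩
  obtain ⟨q, hq⟩ : ∃ q, q = 4 * q' := ⟨_, rfl⟩
  obtain ⟨p, hp⟩ : ∃ p, p = 2 * c * q := ⟨_, rfl⟩
  obtain ⟨C1, hC1⟩ : ∃ C1, C1 = (j + 3).factorial * C + t * (j + 3) * (t + j + 2) := ⟨_, rfl⟩
  obtain ⟨C2, hC2⟩ : ∃ C2, C2 = 2 ^ (p * c) * t * (p * c) := ⟨_, rfl⟩
  have hq2 : 2 * (t + 1) ≤ q := by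
    have : 1 ≤ (C0 + 1) * (j + 2).factorial := Nat.mul_pos (by omega) (Nat.factorial_pos _)
    rw [hq, hq']; nlinarith
  have hp1 : 1 ≤ p := by
    rw [hp]; exact Nat.mul_pos (by omega) (by omega)
  refine ⟨((C1 + C2) * p ^ 2 + 2 * C2 + 2 * C1 + 1) + p * (2 * t + 3) + 4 * (t + s + j + 4), ?_⟩
  intro n hn F hF hP hcard
  have hn1 : (C1 + C2) * p ^ 2 + 2 * C2 + 2 * C1 < n := by omega
  have hn2 : p * (2 * t + 3) ≤ n := by omega
  have hn3 : 4 * (t + s + j + 4) ≤ n := by omega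
  have hn0 : 0 < n := by omega
  clear hn
  obtain ⟨d, hd⟩ : ∃ d : Fin n → ℕ, d = fun x => (nb s F univ x).card := ⟨_, rfl⟩
  have hdn : ∀ x, d x ≤ n := by
    intro x; rw [hd]; simpa using card_le_univ (nb s F univ x)
  have hsum : ∑ x, d x ≤ c * n := by
    have := deg_sum hk hs F univ hF hP
    rw [hd, hc]; simpa using this
  obtain ⟨L, hL⟩ : ∃ L : Finset (Fin n), L = univ.filter (fun x => n ≤ p * d x) := ⟨_, rfl⟩
  have hLm : ∀ x ∈ L, n ≤ p * d x := by
    intro x hx; rw [hL] at hx; exact (mem_filter.1 hx).2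
  have hLc : L.card ≤ p * c := by
    have h1 : L.card * n ≤ ∑ x ∈ L, p * d x := by
      rw [← smul_eq_mul]; exact card_nsmul_le_sum _ _ _ hLm
    have h2 : ∑ x ∈ L, p * d x ≤ p * (c * n) := by
      rw [← mul_sum]
      exact Nat.mul_le_mul_left _ ((sum_le_sum_of_subset (subset_univ L)).trans hsum)
    refine Nat.le_of_mul_le_mul_right (c := n) ?_ hn0
    linarith
  have hheavy : ∑ x ∈ L, d x ≤ t * n + C2 := by
    have h1 := heavy_sum hk hs F hF hP L (by
      intro x hx
      have := hn2.trans (hLm x hx)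
      rw [hd] at this
      exact Nat.le_of_mul_le_mul_left this hp1)
    rw [hd]
    refine h1.trans (Nat.add_le_add_left ?_ _)
    rw [hC2]
    gcongr
    norm_num
  have hnum1 := numeric1 (j := j) (t := t) (c := c) (C := C) hp1 (by omega) d hdn hsum (by
    have := hC n F univ hF (fun e _ => subset_univ e) hP
    rw [hcard] at this
    rw [hd]
    simpa using this)
  rw [← hC1, ← hL] at hnum1
  obtain ⟨hLt, hLq⟩ := numeric2 (by omega) hq2 hp hn1 d hdn L hLm hnum1 hheavy
  refine ⟨L, hLt, ?_⟩
  obtain ⟨Star, hStar⟩ : ∃ Star, Star = (powersetCard (j + 4) (univ : Finset (Fin n))).filter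
    (fun A => (A ∩ L).Nonempty) := ⟨_, rfl⟩
  have hSc : Star.card = F.card := by
    rw [hStar, hcard]; exact star_card _ _ (by omega) L hLt
  rw [← hStar]
  by_cases hsub : F ⊆ Star
  · exact eq_of_subset_of_card_le hsub hSc.le
  exfalso
  obtain ⟨B, hB⟩ : ∃ B, B = F \ Star := ⟨_, rfl⟩
  have hBm : ∀ e ∈ B, e ∈ F ∧ Disjoint e L := by
    intro e he
    rw [hB, mem_sdiff, hStar, mem_filter, mem_powersetCard] at he
    refine ⟨he.1, ?_⟩
    rw [disjoint_iff_inter_eq_empty, ← not_nonempty_iff_eq_empty]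
    intro h
    exact he.2 ⟨⟨subset_univ _, hF e he.1⟩, h⟩
  obtain ⟨Z, hZ⟩ : ∃ Z : Finset (Fin n), Z = univ.filter (fun v => v ∉ L ∧ ∀ x ∈ L, ¬ KP s F x v) :=
    ⟨_, rfl⟩
  have hBZ : ∀ e ∈ B, e ⊆ Z := by
    intro e he u hu
    obtain ⟨h1, h2⟩ := hBm e he
    rw [hZ, mem_filter]
    refine ⟨mem_univ _, disjoint_left.1 h2 hu, ?_⟩
    intro x hx
    exact edges_in_Z hk ht hs F hF hP L hLt hq2 (by
      intro y hy
      have := hLq y hy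
      rw [hd] at this
      exact this) (by omega) e h1 h2 u hu x hx
  have hBcard : B.card ≤ C0 * Z.card ^ (j + 3) := by
    have := hC0 n B Z (fun e he => hF e (hBm e he).1) hBZ (by
      rintro ⟨P, p1, p2, p3⟩
      exact hP ⟨P, p1, fun i => (hBm _ (p2 i)).1, p3⟩)
    simpa using this
  have hz1 : 1 ≤ Z.card := by
    rw [not_subset] at hsub
    obtain ⟨e, he, he'⟩ := hsub
    have heB : e ∈ B := by rw [hB, mem_sdiff]; exact ⟨he, he'⟩
    have h1 := card_le_card (hBZ e heB)
    rw [hF e he] at h1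
    omega
  obtain ⟨x, hx⟩ : L.Nonempty := by rw [← card_pos]; omega
  have hzq : 4 * q' * Z.card ≤ n := by
    rw [← hq]
    refine le_trans (Nat.mul_le_mul_left q ?_) (hLq x hx)
    have h1 : Z ⊆ univ \ nb s F univ x := by
      intro u hu
      rw [hZ, mem_filter] at hu
      simp only [mem_sdiff, mem_univ, true_and, nb, mem_filter]
      exact hu.2.2 x hx
    have h2 := card_le_card h1
    rw [card_sdiff_of_subset (subset_univ _), card_univ, Fintype.card_fin] at h2
    rw [hd]
    exact h2
  have hnum3 := numeric3 (s := s) hq' hz1 hzq (by omega)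
  have hlow := missing_lower (s := s) hk F L Z hLt x hx (by
    rw [disjoint_left]
    intro u hu
    rw [hZ, mem_filter] at hu
    exact hu.2.1) (by
    intro u hu
    rw [hZ, mem_filter] at hu
    exact hu.2.2 x hx)
  rw [← hStar] at hlow
  have hcomm : (F \ Star).card = (Star \ F).card := card_sdiff_comm hSc.symm
  rw [← hB] at hcomm
  simp only [show j + 4 - 2 = j + 2 by omega] at hlow
  omega
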